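/- arXiv:1808.01268 — 4 statements merged into one kernel-verified Lean document; each statement's English description precedes it below -/
import Mathlib

section
/- Let (R_i, R_j) be a pair of square classes of G5 (that is, (R₁,R₃) or (R₂,R₄)), and let t₁ ∈ R_i and t₃ ∈ R_j with t₁ ≠ t₃² (equivalently, t₁ and t₃ do not commute). Then the Hurwitz orbit of the pair (t₁, t₃) has exactly four elements; exactly four distinct reflections appear as entries of pairs in this orbit, namely t₁, t₂ ∈ R_i and t₃, t₄ ∈ R_j; and moreover R_i = {t₁, t₂, t₃², t₄²}. -/
noncomputable section

open Matrix Complex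

/-- The `i`-th Hurwitz move on length-`k` tuples of group elements. -/
def IsHurwitzMove {G : Type*} [Group G] {k : ℕ} (t t' : Fin k → G) : Prop :=
  ∃ i : ℕ, ∃ h : i + 1 < k,
    t' ⟨i, Nat.lt_of_succ_lt h⟩ = t ⟨i + 1, h⟩ ∧
    t' ⟨i + 1, h⟩ = (t ⟨i + 1, h⟩)⁻¹ * t ⟨i, Nat.lt_of_succ_lt h⟩ * t ⟨i + 1, h⟩ ∧
    ∀ j : Fin k, (j : ℕ) ≠ i → (j : ℕ) ≠ i + 1 → t' j = t j

/-- Two tuples lie in the same Hurwitz orbit. -/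
def SameHurwitzOrbit {G : Type*} [Group G] {k : ℕ} (t t' : Fin k → G) : Prop :=
  Relation.EqvGen IsHurwitzMove t t'

/-- A group element `r` appears (as an entry) in the Hurwitz orbit of the tuple `t`. -/
def Appears {G : Type*} [Group G] {k : ℕ} (r : G) (t : Fin k → G) : Prop :=
  ∃ s : Fin k → G, SameHurwitzOrbit t s ∧ ∃ j, s j = r

/-- A tuple has two consecutive equal entries. -/
def HasConsecutiveEqualPair {G : Type*} [Group G] {k : ℕ} (t : Fin k → G) : Prop :=
  ∃ i : ℕ, ∃ h : i + 1 < k, t ⟨i, Nat.lt_of_succ_lt h⟩ = t ⟨i + 1, h⟩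

/-- Replace the `p`-th entry of a tuple by two consecutive copies of its square. -/
def doubleAt {G : Type*} [Group G] {m : ℕ} (t : Fin m → G) (p : Fin m) : Fin (m + 1) → G :=
  fun j =>
    if h1 : (j : ℕ) < (p : ℕ) then t ⟨j, h1.trans p.isLt⟩
    else if h2 : (j : ℕ) ≤ (p : ℕ) + 1 then (t p) ^ 2
    else t ⟨(j : ℕ) - 1, by have := j.isLt; omega⟩

/-- `ω = e^(2πi/3)`. -/
def ω : ℂ := Complex.exp (2 * Real.pi * Complex.I / 3)

def AMat : Matrix (Fin 2) (Fin 2) ℂ := !![1, 0; 0, ω]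

def BMat : Matrix (Fin 2) (Fin 2) ℂ :=
  !![(ω - ω ^ 2) / 3, ω ^ 2; (-2 * ω ^ 2) / 3, (-ω - 2 * ω ^ 2) / 3]

/-- The complex reflection group G₄ as the subgroup of GL(2,ℂ) generated by `AMat`, `BMat`. -/
def G4 : Subgroup (GL (Fin 2) ℂ) :=
  Subgroup.closure {g : GL (Fin 2) ℂ |
    (g : Matrix (Fin 2) (Fin 2) ℂ) = AMat ∨ (g : Matrix (Fin 2) (Fin 2) ℂ) = BMat}

/-- The matrix underlying an element of G₄. -/
def mat (t : G4) : Matrix (Fin 2) (Fin 2) ℂ := ((t : GL (Fin 2) ℂ) : Matrix (Fin 2) (Fin 2) ℂ)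

/-- A reflection in G₄: a non-identity element with eigenvalue 1. -/
def IsReflection (t : G4) : Prop := t ≠ 1 ∧ (mat t - 1).det = 0

/-- The conjugacy class R₁ of reflections of determinant ω. -/
def R1 : Set G4 := {t | IsReflection t ∧ (mat t).det = ω}

/-- The conjugacy class R₂ of reflections of determinant ω². -/
def R2 : Set G4 := {t | IsReflection t ∧ (mat t).det = ω ^ 2}

/-- A Coxeter element of G₄: an element with a primitive 6th root of unity as eigenvalue. -/
def IsCoxeter (c : G4) : Prop :=
  ∃ ζ : ℂ, IsPrimitiveRoot ζ 6 ∧ (mat c - ζ • (1 : Matrix (Fin 2) (Fin 2) ℂ)).det = 0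

/-- The relators of G₅: a³, b³, abab(baba)⁻¹. -/
def g5Rels : Set (FreeGroup (Fin 2)) :=
  {FreeGroup.of 0 ^ 3, FreeGroup.of 1 ^ 3,
    FreeGroup.of 0 * FreeGroup.of 1 * FreeGroup.of 0 * FreeGroup.of 1 *
      (FreeGroup.of 1 * FreeGroup.of 0 * FreeGroup.of 1 * FreeGroup.of 0)⁻¹}

/-- The complex reflection group G₅, by its presentation ⟨a,b | a³ = b³ = 1, abab = baba⟩. -/
abbrev G5 := PresentedGroup g5Rels

def ga : G5 := PresentedGroup.of 0
def gb : G5 := PresentedGroup.of 1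

/-- The conjugacy class of `a` in G₅. -/
def S1 : Set G5 := {t | IsConj ga t}
/-- The conjugacy class of `b` in G₅. -/
def S2 : Set G5 := {t | IsConj gb t}
/-- The conjugacy class of `a²` in G₅. -/
def S3 : Set G5 := {t | IsConj (ga ^ 2) t}
/-- The conjugacy class of `b²` in G₅. -/
def S4 : Set G5 := {t | IsConj (gb ^ 2) t}

/-- A reflection in G₅: a conjugate of a, b, a², or b². -/
def IsReflection5 (t : G5) : Prop := t ∈ S1 ∨ t ∈ S2 ∨ t ∈ S3 ∨ t ∈ S4

/-- A Coxeter element of G₅: an element of order 12. -/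
def IsCoxeter5 (c : G5) : Prop := orderOf c = 12

/-!
Squaring identifies the class of `a²` with the class `C` of `a`, so `(t₁, t₃) = (x, y⁻¹)` with
`x ≠ y` in `C`. The relations of `G₅` imply that `a` and `c = bab⁻¹` satisfy `aca = cac`, and then
`C = {a, cac⁻¹, c, c⁻¹ac}`, because this set is stable under conjugation by `a` and by `b`.
Conjugation by `a` permutes the three elements of `C` other than `a` cyclically, so conjugation is
doubly transitive on `C`, and any two distinct `x, y ∈ C` satisfy `xyx = yxy`. From this and
`x³ = 1` alone, the Hurwitz move cycles through the consecutive pairs of the cyclic sequence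
`x, y⁻¹, yxy⁻¹, y⁻¹x⁻¹y`, whose four entries are distinct as soon as `x ≠ y`.
-/

section HurwitzPairs

variable {G : Type*} [Group G]

theorem isHurwitzMove_pair_iff {s s' : Fin 2 → G} :
    IsHurwitzMove s s' ↔ s' 0 = s 1 ∧ s 0 * s 1 = s' 0 * s' 1 := by
  constructor
  · rintro ⟨i, hi, hfst, hsnd, -⟩
    obtain rfl : i = 0 := by omega
    replace hfst : s' 0 = s 1 := hfst
    replace hsnd : s' 1 = (s 1)⁻¹ * s 0 * s 1 := hsnd
    exact ⟨hfst, by rw [hfst, hsnd]; group⟩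
  · rintro ⟨hfst, hprod⟩
    refine ⟨0, by omega, hfst, ?_, fun j hj₀ hj₁ => by omega⟩
    change s' 1 = (s 1)⁻¹ * s 0 * s 1
    rw [mul_assoc, hprod, hfst, inv_mul_cancel_left]

theorem SameHurwitzOrbit.mem_iff {k : ℕ} {S : Set (Fin k → G)}
    (hS : ∀ s s', IsHurwitzMove s s' → (s ∈ S ↔ s' ∈ S)) {s s' : Fin k → G}
    (h : SameHurwitzOrbit s s') : s ∈ S ↔ s' ∈ S := by
  induction h with
  | rel _ _ h => exact hS _ _ h
  | refl _ => exact Iff.rfl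
  | symm _ _ _ ih => exact ih.symm
  | trans _ _ _ _ _ ih₁ ih₂ => exact ih₁.trans ih₂

theorem zmod_induction {n : ℕ} {P : ZMod n → Prop} (zero : P 0)
    (add_one : ∀ i, P i ↔ P (i + 1)) (i : ZMod n) : P i := by
  obtain ⟨m, rfl⟩ := ZMod.intCast_surjective i
  induction m with
  | zero => simpa using zero
  | succ m ih => simpa using (add_one _).1 ih
  | pred m ih => exact (add_one _).2 (by simpa using ih)

variable {n : ℕ} {t : ZMod n → G} {c : G}

theorem isHurwitzMove_consecutive (ht : ∀ i, t i * t (i + 1) = c) (i : ZMod n) :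
    IsHurwitzMove ![t i, t (i + 1)] ![t (i + 1), t (i + 1 + 1)] :=
  isHurwitzMove_pair_iff.2 ⟨rfl, (ht i).trans (ht (i + 1)).symm⟩

theorem mem_range_consecutive_iff_of_isHurwitzMove (ht : ∀ i, t i * t (i + 1) = c)
    {s s' : Fin 2 → G} (h : IsHurwitzMove s s') :
    s ∈ Set.range (fun i => ![t i, t (i + 1)]) ↔ s' ∈ Set.range (fun i => ![t i, t (i + 1)]) := by
  obtain ⟨hfst, hprod⟩ := isHurwitzMove_pair_iff.1 h
  constructor
  · rintro ⟨i, rfl⟩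
    have hfst' : s' 0 = t (i + 1) := hfst
    have hsnd' : s' 1 = t (i + 1 + 1) := mul_left_cancel (a := t (i + 1)) <| by
      rw [ht, ← hfst', ← hprod]
      exact ht i
    exact ⟨i + 1, by ext j; fin_cases j <;> simp [hfst', hsnd']⟩
  · rintro ⟨i, rfl⟩
    obtain ⟨i, rfl⟩ : ∃ j, j + 1 = i := ⟨i - 1, sub_add_cancel i 1⟩
    have hsnd' : s 1 = t (i + 1) := hfst.symm
    have hfst' : s 0 = t i := mul_right_cancel (b := t (i + 1)) <| by
      rw [ht, ← hsnd', hprod]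
      exact ht (i + 1)
    exact ⟨i, by ext j; fin_cases j <;> simp [hfst', hsnd']⟩

theorem setOf_sameHurwitzOrbit_eq_range (ht : ∀ i, t i * t (i + 1) = c) :
    {s | SameHurwitzOrbit ![t 0, t 1] s} = Set.range (fun i => ![t i, t (i + 1)]) := by
  apply Set.Subset.antisymm
  · intro s hs
    exact (hs.mem_iff fun _ _ => mem_range_consecutive_iff_of_isHurwitzMove ht).1 ⟨0, by simp⟩
  · rintro _ ⟨i, rfl⟩
    have hstep (i : ZMod n) := Relation.EqvGen.rel _ _ (isHurwitzMove_consecutive ht i)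
    refine zmod_induction (P := fun i => Relation.EqvGen IsHurwitzMove _ ![t i, t (i + 1)]) ?_
      (fun i => ⟨fun h => h.trans _ _ _ (hstep i), fun h => h.trans _ _ _ ((hstep i).symm _ _)⟩) i
    simpa only [zero_add] using Relation.EqvGen.refl _

theorem setOf_appears_eq_range (ht : ∀ i, t i * t (i + 1) = c) :
    {r | Appears r ![t 0, t 1]} = Set.range t := by
  have horbit (s : Fin 2 → G) :
      SameHurwitzOrbit ![t 0, t 1] s ↔ ∃ i, ![t i, t (i + 1)] = s :=
    Set.ext_iff.1 (setOf_sameHurwitzOrbit_eq_range ht) s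
  ext r
  constructor
  · rintro ⟨s, hs, j, rfl⟩
    obtain ⟨i, rfl⟩ := (horbit s).1 hs
    fin_cases j
    exacts [⟨i, rfl⟩, ⟨i + 1, rfl⟩]
  · rintro ⟨i, rfl⟩
    exact ⟨_, (horbit _).2 ⟨i, rfl⟩, 0, rfl⟩

theorem ncard_sameHurwitzOrbit (ht : ∀ i, t i * t (i + 1) = c) (hinj : Function.Injective t) :
    {s | SameHurwitzOrbit ![t 0, t 1] s}.ncard = n := by
  have hpairs : Function.Injective (fun i => ![t i, t (i + 1)]) :=
    fun _ _ hij => hinj (congrFun hij 0)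
  rw [setOf_sameHurwitzOrbit_eq_range ht, Set.ncard_range_of_injective hpairs, Nat.card_zmod]

-- Each entry determines both of its neighbours, so a coincidence can be translated to index `0`.
theorem injective_of_consecutive_mul_eq (ht : ∀ i, t i * t (i + 1) = c)
    (hne : ∀ d, d ≠ 0 → t d ≠ t 0) : Function.Injective t := by
  intro i j hij
  have hshift (m : ZMod n) : t (i + m) = t (j + m) := by
    refine zmod_induction (P := fun m => t (i + m) = t (j + m)) (by simpa using hij)
      (fun m => ?_) m
    have hmul : t (i + m) * t (i + m + 1) = t (j + m) * t (j + m + 1) := (ht _).trans (ht _).symm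
    rw [← add_assoc, ← add_assoc]
    exact ⟨fun h => mul_left_cancel (h ▸ hmul), fun h => mul_right_cancel (h ▸ hmul)⟩
  by_contra hne_ij
  refine hne (i - j) (sub_ne_zero.2 hne_ij) ?_
  simpa [sub_eq_add_neg] using hshift (-j)

end HurwitzPairs

theorem sq_eq_inv_of_pow_three_eq_one {G : Type*} [Group G] {x : G} (hx : x ^ 3 = 1) :
    x ^ 2 = x⁻¹ :=
  eq_inv_of_mul_eq_one_left (by rw [← pow_succ, hx])

theorem inv_sq_eq_self_of_pow_three_eq_one {G : Type*} [Group G] {x : G} (hx : x ^ 3 = 1) :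
    x⁻¹ ^ 2 = x := by
  rw [inv_pow, sq_eq_inv_of_pow_three_eq_one hx, inv_inv]

theorem conj_conj_eq_inv_conj_of_pow_three_eq_one {G : Type*} [Group G] {x : G} (hx : x ^ 3 = 1)
    (y : G) : x * (x * y * x⁻¹) * x⁻¹ = x⁻¹ * y * x :=
  calc x * (x * y * x⁻¹) * x⁻¹ = x ^ 2 * y * (x ^ 2)⁻¹ := by simp [sq, mul_assoc]
    _ = x⁻¹ * y * x := by rw [sq_eq_inv_of_pow_three_eq_one hx, inv_inv]

/-- The defining relations of the complex reflection group `G₄` on its two standard generators. The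
relation `y ^ 3 = 1` is left out, since the braid relation makes `y` conjugate to `x`. -/
structure IsCubicBraidPair {G : Type*} [Group G] (x y : G) : Prop where
  pow_three : x ^ 3 = 1
  braid : x * y * x = y * x * y

/-- The conjugates of `x` in the subgroup generated by a cubic braid pair `x, y`. -/
def braidTetrad {G : Type*} [Group G] (x y : G) : Set G :=
  {x, y * x * y⁻¹, y, y⁻¹ * x * y}

/-- The elements met along the Hurwitz orbit of `(x, y⁻¹)` for a cubic braid pair `x, y`; the orbit
consists of the pairs of consecutive entries. -/
def braidCycle {G : Type*} [Group G] (x y : G) : ZMod 4 → G :=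
  ![x, y⁻¹, y * x * y⁻¹, (y⁻¹ * x * y)⁻¹]

theorem range_braidCycle {G : Type*} [Group G] (x y : G) :
    Set.range (braidCycle x y) = {x, y * x * y⁻¹, y⁻¹, (y⁻¹ * x * y)⁻¹} := by
  have hrange : Set.range (braidCycle x y) = {x, y⁻¹, y * x * y⁻¹, (y⁻¹ * x * y)⁻¹} := by
    change Set.range ![x, y⁻¹, y * x * y⁻¹, (y⁻¹ * x * y)⁻¹] = _
    simp only [Matrix.range_cons, Matrix.range_empty, Set.union_empty, Set.singleton_union]
  rw [hrange, Set.insert_comm y⁻¹]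

theorem map_mem_braidTetrad {G H : Type*} [Group G] [Group H] (f : G →* H) {x y s : G}
    (hs : s ∈ braidTetrad x y) : f s ∈ braidTetrad (f x) (f y) := by
  rcases hs with rfl | rfl | rfl | rfl <;> simp [braidTetrad]

namespace IsCubicBraidPair

variable {G : Type*} [Group G] {x y : G}

theorem map {H : Type*} [Group H] (h : IsCubicBraidPair x y) (f : G →* H) :
    IsCubicBraidPair (f x) (f y) where
  pow_three := by rw [← map_pow, h.pow_three, map_one]
  braid := by simp only [← map_mul, h.braid]

theorem eq_conj (h : IsCubicBraidPair x y) : y = (x * y) * x * (x * y)⁻¹ := by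
  rw [h.braid]
  group

theorem symm (h : IsCubicBraidPair x y) : IsCubicBraidPair y x where
  pow_three := by rw [h.eq_conj, conj_pow, h.pow_three, mul_one, mul_inv_cancel]
  braid := h.braid.symm

theorem conj_eq (h : IsCubicBraidPair x y) : x * y * x⁻¹ = y⁻¹ * x * y := by
  rw [mul_inv_eq_iff_eq_mul, mul_assoc, mul_assoc, ← mul_assoc x y x, h.braid]
  group

theorem inv_conj_eq (h : IsCubicBraidPair x y) : x⁻¹ * y * x = y * x * y⁻¹ :=
  h.symm.conj_eq.symm

theorem conj_conj_eq (h : IsCubicBraidPair x y) : x * (x * y * x⁻¹) * x⁻¹ = y * x * y⁻¹ :=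
  (conj_conj_eq_inv_conj_of_pow_three_eq_one h.pow_three y).trans h.inv_conj_eq

theorem conj_conj_right_eq (h : IsCubicBraidPair x y) :
    (x * y * x⁻¹) * y * (x * y * x⁻¹)⁻¹ = y * x * y⁻¹ :=
  calc (x * y * x⁻¹) * y * (x * y * x⁻¹)⁻¹ = x * (y * (x⁻¹ * y * x) * y⁻¹) * x⁻¹ := by group
    _ = x * (x * y * x⁻¹) * x⁻¹ := by rw [h.inv_conj_eq, h.symm.conj_conj_eq]
    _ = y * x * y⁻¹ := h.conj_conj_eq

theorem eq_of_commute (h : IsCubicBraidPair x y) (hcomm : Commute x y) : x = y :=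
  mul_left_cancel (a := x * y) (by rw [h.braid, hcomm.eq])

theorem ne_inv (h : IsCubicBraidPair x y) (hne : x ≠ y) : x ≠ y⁻¹ := by
  rintro rfl
  exact hne (h.eq_of_commute (Commute.refl y).inv_left)

theorem braidCycle_mul_add_one (h : IsCubicBraidPair x y) (i : ZMod 4) :
    braidCycle x y i * braidCycle x y (i + 1) = x * y⁻¹ := by
  have hinv_conj : (y⁻¹ * x * y)⁻¹ = x * y⁻¹ * x⁻¹ := by
    rw [← h.conj_eq, _root_.conj_inv]
  have hysq : y * y = y⁻¹ := by
    rw [← sq, sq_eq_inv_of_pow_three_eq_one h.symm.pow_three]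
  fin_cases i
  · rfl
  · change y⁻¹ * (y * x * y⁻¹) = x * y⁻¹
    group
  · change (y * x * y⁻¹) * (y⁻¹ * x * y)⁻¹ = x * y⁻¹
    calc (y * x * y⁻¹) * (y⁻¹ * x * y)⁻¹ = y * x * (y * y)⁻¹ * x⁻¹ * y := by group
      _ = y * x * y * x⁻¹ * y := by rw [hysq, inv_inv]
      _ = x * (y * y) := by rw [← h.braid]; group
      _ = x * y⁻¹ := by rw [hysq]
  · change (y⁻¹ * x * y)⁻¹ * x = x * y⁻¹
    rw [hinv_conj, inv_mul_cancel_right]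

theorem braidCycle_injective (h : IsCubicBraidPair x y) (hne : x ≠ y) :
    Function.Injective (braidCycle x y) := by
  refine injective_of_consecutive_mul_eq h.braidCycle_mul_add_one fun d hd heq => ?_
  fin_cases d
  · exact hd rfl
  · exact h.ne_inv hne (Eq.symm heq)
  · have hconj : y * x * y⁻¹ = x := heq
    exact hne (h.eq_of_commute (mul_inv_eq_iff_eq_mul.1 hconj).symm)
  · have hmul : (y⁻¹ * x * y)⁻¹ * x = x * y⁻¹ := h.braidCycle_mul_add_one 3
    have hconj : (y⁻¹ * x * y)⁻¹ = x := heq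
    exact h.ne_inv hne (mul_left_cancel (hconj ▸ hmul))

theorem conj_left_mem_braidTetrad (h : IsCubicBraidPair x y) {s : G} (hs : s ∈ braidTetrad x y) :
    x * s * x⁻¹ ∈ braidTetrad x y := by
  rcases hs with rfl | rfl | rfl | rfl
  · exact Or.inl (mul_inv_cancel_right _ _)
  · refine Or.inr (Or.inr (Or.inl ?_))
    rw [← h.inv_conj_eq]
    group
  · exact Or.inr (Or.inr (Or.inr h.conj_eq))
  · refine Or.inr (Or.inl ?_)
    rw [← h.conj_eq, h.conj_conj_eq]

theorem exists_zpow_conj_eq_of_mem_braidTetrad (h : IsCubicBraidPair x y) {s : G}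
    (hs : s ∈ braidTetrad x y) (hne : s ≠ x) : ∃ m : ℤ, x ^ m * y * (x ^ m)⁻¹ = s := by
  rcases hs with rfl | rfl | rfl | rfl
  · exact absurd rfl hne
  · exact ⟨-1, by simpa using h.inv_conj_eq⟩
  · exact ⟨0, by simp⟩
  · exact ⟨1, by simpa using h.conj_eq⟩

theorem braidTetrad_subset_conjugatesOf (h : IsCubicBraidPair x y) :
    braidTetrad x y ⊆ conjugatesOf x := by
  rintro s (rfl | rfl | rfl | rfl)
  · exact IsConj.refl _
  · exact isConj_iff.2 ⟨y, rfl⟩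
  · exact isConj_iff.2 ⟨_, h.eq_conj.symm⟩
  · exact isConj_iff.2 ⟨y⁻¹, by rw [inv_inv]⟩

end IsCubicBraidPair

section ConjugacyClass

variable {G : Type*} [Group G]

open scoped Pointwise in
theorem conj_mem_of_closure_eq_top {T S : Set G} (hT : Subgroup.closure T = ⊤) (hS : S.Finite)
    (hstable : ∀ g ∈ T, ∀ s ∈ S, g * s * g⁻¹ ∈ S) (g : G) {s : G} (hs : s ∈ S) :
    g * s * g⁻¹ ∈ S := by
  have hle : Subgroup.closure T ≤ (MulAction.stabilizer (MulAut G) S).comap MulAut.conj :=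
    (Subgroup.closure_le _).2 fun g hg => (MulAction.mem_stabilizer_set' hS).2 (hstable g hg)
  exact (MulAction.mem_stabilizer_set' hS).1 (hle (hT ▸ Subgroup.mem_top g)) hs

theorem inv_mem_conjugatesOf_inv_iff {x s : G} : s⁻¹ ∈ conjugatesOf x⁻¹ ↔ s ∈ conjugatesOf x := by
  change IsConj _ _ ↔ IsConj _ _
  simp only [isConj_iff, ← _root_.conj_inv, _root_.inv_inj]

theorem conj_mem_conjugatesOf {x s : G} (hs : s ∈ conjugatesOf x) (g : G) :
    g * s * g⁻¹ ∈ conjugatesOf x :=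
  IsConj.trans hs (isConj_iff.2 ⟨g, rfl⟩)

theorem exists_conj_eq_and_conj_eq {x y s t : G} (h : IsCubicBraidPair x y)
    (hclass : conjugatesOf x = braidTetrad x y) (hs : s ∈ conjugatesOf x) (ht : t ∈ conjugatesOf x)
    (hne : s ≠ t) : ∃ g : G, MulAut.conj g x = s ∧ MulAut.conj g y = t := by
  obtain ⟨g, rfl⟩ := isConj_iff.1 hs
  have hmem : g⁻¹ * t * g ∈ braidTetrad x y := by
    simpa [hclass] using conj_mem_conjugatesOf ht g⁻¹
  have hne' : g⁻¹ * t * g ≠ x := by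
    rintro rfl
    exact hne (by group)
  obtain ⟨m, hm⟩ := h.exists_zpow_conj_eq_of_mem_braidTetrad hmem hne'
  refine ⟨g * x ^ m, ?_, ?_⟩
  · rw [MulAut.conj_apply]
    group
  · calc g * x ^ m * y * (g * x ^ m)⁻¹ = g * (x ^ m * y * (x ^ m)⁻¹) * g⁻¹ := by group
      _ = t := by rw [hm]; group

theorem isCubicBraidPair_and_conjugatesOf_eq_braidTetrad {x y s t : G} (h : IsCubicBraidPair x y)
    (hclass : conjugatesOf x = braidTetrad x y) (hs : s ∈ conjugatesOf x) (ht : t ∈ conjugatesOf x)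
    (hne : s ≠ t) : IsCubicBraidPair s t ∧ conjugatesOf x = braidTetrad s t := by
  obtain ⟨g, rfl, rfl⟩ := exists_conj_eq_and_conj_eq h hclass hs ht hne
  have hbraid := h.map (MulAut.conj g).toMonoidHom
  refine ⟨hbraid, Set.Subset.antisymm (fun r hr => ?_) ?_⟩
  · have hmem : g⁻¹ * r * g ∈ braidTetrad x y := by
      simpa [hclass] using conj_mem_conjugatesOf hr g⁻¹
    simpa [mul_assoc] using map_mem_braidTetrad (MulAut.conj g).toMonoidHom hmem
  · rw [IsConj.conjugatesOf_eq hs]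
    exact hbraid.braidTetrad_subset_conjugatesOf

end ConjugacyClass

/-- The defining relations of the complex reflection group `G₅` on its two standard generators. -/
structure IsG5Pair {G : Type*} [Group G] (a b : G) : Prop where
  pow_three_left : a ^ 3 = 1
  pow_three_right : b ^ 3 = 1
  braid : a * b * a * b = b * a * b * a

namespace IsG5Pair

variable {G : Type*} [Group G] {a b : G}

theorem symm (h : IsG5Pair a b) : IsG5Pair b a :=
  ⟨h.pow_three_right, h.pow_three_left, h.braid.symm⟩

theorem isCubicBraidPair (h : IsG5Pair a b) : IsCubicBraidPair a (b * a * b⁻¹) where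
  pow_three := h.pow_three_left
  braid := by
    have hinv : b⁻¹ * b⁻¹ = b := by
      rw [← sq, inv_sq_eq_self_of_pow_three_eq_one h.pow_three_right]
    calc a * (b * a * b⁻¹) * a = (a * b * a * b) * (b⁻¹ * b⁻¹) * a := by group
      _ = (b * a * b * a) * b * a := by rw [hinv, h.braid]
      _ = b * a * (b * a * b * a) := by group
      _ = b * a * (a * b * a * b) := by rw [h.braid]
      _ = b * a * b⁻¹ * (b * a * b * a) * b := by group
      _ = b * a * b⁻¹ * (a * b * a * b) * (b⁻¹ * b⁻¹) := by rw [h.braid, hinv]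
      _ = (b * a * b⁻¹) * a * (b * a * b⁻¹) := by group

theorem inv_conj_eq (h : IsG5Pair a b) : b⁻¹ * a * b = a * (b * a * b⁻¹) * a⁻¹ :=
  calc b⁻¹ * a * b = b⁻¹ * (a * b * a * b) * b⁻¹ * a⁻¹ := by group
    _ = b⁻¹ * (b * a * b * a) * b⁻¹ * a⁻¹ := by rw [h.braid]
    _ = a * (b * a * b⁻¹) * a⁻¹ := by group

theorem conj_right_mem_braidTetrad (h : IsG5Pair a b) {s : G}
    (hs : s ∈ braidTetrad a (b * a * b⁻¹)) : b * s * b⁻¹ ∈ braidTetrad a (b * a * b⁻¹) := by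
  have hc := h.isCubicBraidPair
  have hconj_c : b * (b * a * b⁻¹) * b⁻¹ = a * (b * a * b⁻¹) * a⁻¹ :=
    (conj_conj_eq_inv_conj_of_pow_three_eq_one h.pow_three_right a).trans h.inv_conj_eq
  have hmap (p q : G) : b * (p * q * p⁻¹) * b⁻¹ =
      (b * p * b⁻¹) * (b * q * b⁻¹) * (b * p * b⁻¹)⁻¹ := by group
  rcases hs with rfl | rfl | rfl | rfl
  · exact Or.inr (Or.inr (Or.inl rfl))
  · refine Or.inr (Or.inl ?_)
    rw [hmap, hconj_c, hc.conj_conj_right_eq]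
  · exact Or.inr (Or.inr (Or.inr (hconj_c.trans hc.conj_eq)))
  · refine Or.inl ?_
    rw [← hc.conj_eq, ← h.inv_conj_eq]
    group

theorem conjugatesOf_eq_braidTetrad (h : IsG5Pair a b) (hgen : Subgroup.closure {a, b} = ⊤) :
    conjugatesOf a = braidTetrad a (b * a * b⁻¹) := by
  refine Set.Subset.antisymm (fun s hs => ?_) h.isCubicBraidPair.braidTetrad_subset_conjugatesOf
  obtain ⟨g, rfl⟩ := isConj_iff.1 hs
  refine conj_mem_of_closure_eq_top hgen (Set.toFinite {_, _, _, _}) ?_ g (Or.inl rfl)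
  rintro g (rfl | rfl) s hs
  · exact h.isCubicBraidPair.conj_left_mem_braidTetrad hs
  · exact h.conj_right_mem_braidTetrad hs

end IsG5Pair

theorem g5_square_classes_pair_orbit_general {G : Type*} [Group G] {a b : G} (hab : IsG5Pair a b)
    (hgen : Subgroup.closure {a, b} = ⊤) {t₁ t₃ : G} (h₁ : t₁ ∈ conjugatesOf a)
    (h₃ : t₃ ∈ conjugatesOf (a ^ 2)) (hne : t₁ ≠ t₃ ^ 2) :
    {s : Fin 2 → G | SameHurwitzOrbit ![t₁, t₃] s}.ncard = 4 ∧
    ∃ t₂ t₄ : G, t₂ ∈ conjugatesOf a ∧ t₄ ∈ conjugatesOf (a ^ 2) ∧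
      {r : G | Appears r ![t₁, t₃]} = {t₁, t₂, t₃, t₄} ∧
      ({t₁, t₂, t₃, t₄} : Set G).ncard = 4 ∧
      conjugatesOf a = {t₁, t₂, t₃ ^ 2, t₄ ^ 2} := by
  rw [sq_eq_inv_of_pow_three_eq_one hab.pow_three_left] at h₃ ⊢
  have hinv_sq {r : G} (hr : r ∈ conjugatesOf a) : r⁻¹ ^ 2 = r :=
    inv_sq_eq_self_of_pow_three_eq_one (isConj_one_right.1 (hab.pow_three_left ▸ hr.pow 3))
  obtain ⟨y, rfl⟩ : ∃ y, y⁻¹ = t₃ := ⟨t₃⁻¹, inv_inv t₃⟩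
  have hy : y ∈ conjugatesOf a := inv_mem_conjugatesOf_inv_iff.1 h₃
  rw [hinv_sq hy] at hne
  obtain ⟨hbraid, hclass⟩ := isCubicBraidPair_and_conjugatesOf_eq_braidTetrad
    hab.isCubicBraidPair (hab.conjugatesOf_eq_braidTetrad hgen) h₁ hy hne
  have hcycle := hbraid.braidCycle_mul_add_one
  have hinj := hbraid.braidCycle_injective hne
  have ht₄ : y⁻¹ * t₁ * y ∈ conjugatesOf a := by simpa using conj_mem_conjugatesOf h₁ y⁻¹
  refine ⟨ncard_sameHurwitzOrbit hcycle hinj, y * t₁ * y⁻¹, (y⁻¹ * t₁ * y)⁻¹,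
    conj_mem_conjugatesOf h₁ y, inv_mem_conjugatesOf_inv_iff.2 ht₄, ?_, ?_, ?_⟩
  · exact (setOf_appears_eq_range hcycle).trans (range_braidCycle t₁ y)
  · rw [← range_braidCycle, Set.ncard_range_of_injective hinj, Nat.card_zmod]
  · rw [hinv_sq hy, hinv_sq ht₄, hclass, braidTetrad]

theorem isG5Pair_ga_gb : IsG5Pair ga gb where
  pow_three_left :=
    PresentedGroup.one_of_mem (rels := g5Rels) (x := FreeGroup.of 0 ^ 3) (by simp [g5Rels])
  pow_three_right :=
    PresentedGroup.one_of_mem (rels := g5Rels) (x := FreeGroup.of 1 ^ 3) (by simp [g5Rels])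
  braid := mul_inv_eq_one.1 <| PresentedGroup.one_of_mem (rels := g5Rels)
    (x := FreeGroup.of 0 * FreeGroup.of 1 * FreeGroup.of 0 * FreeGroup.of 1 *
      (FreeGroup.of 1 * FreeGroup.of 0 * FreeGroup.of 1 * FreeGroup.of 0)⁻¹) (by simp [g5Rels])

theorem closure_ga_gb : Subgroup.closure {ga, gb} = ⊤ := by
  have hrange : Set.range (PresentedGroup.of (rels := g5Rels)) = {ga, gb} := by
    ext g
    simp only [Set.mem_range, Fin.exists_fin_two, Set.mem_insert_iff, Set.mem_singleton_iff, ga, gb,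
      eq_comm]
  rw [← hrange, PresentedGroup.closure_range_of]

theorem g5_square_classes_pair_orbit (Ri Rj : Set G5)
    (h : (Ri = S1 ∧ Rj = S3) ∨ (Ri = S2 ∧ Rj = S4))
    (t₁ t₃ : G5) (h₁ : t₁ ∈ Ri) (h₃ : t₃ ∈ Rj) (hne : t₁ ≠ t₃ ^ 2) :
    {s : Fin 2 → G5 | SameHurwitzOrbit ![t₁, t₃] s}.ncard = 4 ∧
    ∃ t₂ t₄ : G5, t₂ ∈ Ri ∧ t₄ ∈ Rj ∧
      {r : G5 | Appears r ![t₁, t₃]} = {t₁, t₂, t₃, t₄} ∧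
      ({t₁, t₂, t₃, t₄} : Set G5).ncard = 4 ∧
      Ri = {t₁, t₂, t₃ ^ 2, t₄ ^ 2} := by
  rcases h with ⟨rfl, rfl⟩ | ⟨rfl, rfl⟩
  · exact g5_square_classes_pair_orbit_general isG5Pair_ga_gb closure_ga_gb h₁ h₃ hne
  · exact g5_square_classes_pair_orbit_general isG5Pair_ga_gb.symm
      (Set.pair_comm ga gb ▸ closure_ga_gb) h₁ h₃ hne
end
end

section
/- Let (R_i, R_j) be a pair of non-adjacent classes of G5 (that is, (R₁,R₄) or (R₂,R₃)), and let t₁ ∈ R_i and t₄ ∈ R_j be non-commuting. Then the Hurwitz orbit of the pair (t₁, t₄) has exactly six elements, and exactly three distinct elements of R_i (and exactly three distinct elements of R_j) appear as entries of pairs in this orbit. -/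
noncomputable section

open Matrix Complex

/-!
On pairs, two Hurwitz moves conjugate both entries by the inverse of the invariant product
`p = x * y`. If `x` and `y` are not conjugate, an odd number of moves never returns to the start,
so the orbit has twice as many elements as the orbit of `x` under conjugation by `p`, whose size is
also the number of entries in each of the two classes. In `G₅` the element `z = abab` is central,
and the conjugates of `b` are `b`, `aba⁻¹`, `a⁻¹ba` and `z²a⁻¹`. The last commutes with `a`, and the
others are conjugates of `b` by powers of `a`, so up to simultaneous conjugation the only
non-commuting pair in the classes of `a` and `b²` is `(a, b²)`. As `ab² = z⁻¹(a⁻¹ba)`, the cube of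
its product is the central element `z⁻³`, so conjugation by `p` has period `3`. The relations are
symmetric in `a` and `b`, which covers the other pair of classes.
-/

section Orbits

open MulAction Subgroup
open scoped Pointwise

theorem mem_orbit_zpowers_iff {H α : Type*} [Group H] [MulAction H α] {g : H} {x y : α} :
    y ∈ orbit (zpowers g) x ↔ ∃ n : ℤ, g ^ n • x = y := by
  simp only [mem_orbit_iff, Subtype.exists, mk_smul, exists_prop, exists_mem_zpowers]

-- If the orbit is infinite, both sides are the junk value `0`.
theorem ncard_orbit_zpowers {H α : Type*} [Group H] [MulAction H α] (g : H) (x : α) :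
    (orbit (zpowers g) x).ncard = period g x :=
  (Nat.card_congr (orbitZPowersEquiv g x)).trans (Nat.card_zmod _)

theorem eqvGen_apply_eq_iff_mem_orbit_zpowers {α : Type*} (f : Equiv.Perm α) {x y : α} :
    Relation.EqvGen (fun u v => f u = v) x y ↔ y ∈ orbit (zpowers f) x := by
  rw [mem_orbit_zpowers_iff]
  change _ ↔ f.SameCycle x y
  constructor
  · intro h
    induction h with
    | rel u v huv => exact ⟨1, by simpa using huv⟩
    | refl u => exact .refl f u
    | symm u v _ ih => exact ih.symm
    | trans u v w _ _ ihuv ihvw => exact ihuv.trans ihvw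
  · rintro ⟨n, rfl⟩
    induction n with
    | zero => exact .refl _
    | succ n ih =>
      refine ih.trans _ _ _ (.rel _ _ ?_)
      rw [← Equiv.Perm.mul_apply, ← _root_.zpow_one_add, add_comm]
    | pred n ih =>
      refine ih.trans _ _ _ (.symm _ _ (.rel _ _ ?_))
      rw [← Equiv.Perm.mul_apply, ← _root_.zpow_one_add, add_sub_cancel]

theorem mem_of_isConj_of_closure_eq_top {G : Type*} [Group G] {K X : Set G} {x y : G}
    (hK : closure K = ⊤) (hX : X.Finite) (hconj : ∀ k ∈ K, ∀ u ∈ X, k * u * k⁻¹ ∈ X)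
    (hx : x ∈ X) (hxy : IsConj x y) : y ∈ X := by
  obtain ⟨g, rfl⟩ := isConj_iff.1 hxy
  have hle : closure K ≤ (stabilizer (MulAut G) X).comap MulAut.conj :=
    (closure_le _).2 fun k hk => (mem_stabilizer_set' hX).2 fun u hu => hconj k hk u hu
  have hg : MulAut.conj g ∈ stabilizer (MulAut G) X := hle (hK ▸ mem_top g)
  exact (mem_stabilizer_set' hX).1 hg hx

end Orbits

section HurwitzPairs

open MulAction Subgroup

variable {G : Type*} [Group G]

/-- The Hurwitz move on pairs, as a permutation: the action of the generator of the braid group on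
two strands. -/
def hurwitzPerm : Equiv.Perm (Fin 2 → G) where
  toFun s := ![s 1, (s 1)⁻¹ * s 0 * s 1]
  invFun s := ![s 0 * s 1 * (s 0)⁻¹, s 0]
  left_inv s := by ext i; fin_cases i <;> simp [mul_assoc]
  right_inv s := by ext i; fin_cases i <;> simp [mul_assoc]

/-- Conjugation by the inverse of the product of a pair: the effect on each entry of the full twist
of the braid group on two strands, i.e. of two successive Hurwitz moves. -/
def fullTwist (s : Fin 2 → G) : MulAut G := MulAut.conj (s 0 * s 1)⁻¹

theorem isHurwitzMove_iff_hurwitzPerm_eq {s s' : Fin 2 → G} :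
    IsHurwitzMove s s' ↔ hurwitzPerm s = s' := by
  constructor
  · rintro ⟨i, hi, h0, h1, -⟩
    obtain rfl : i = 0 := by omega
    ext j
    fin_cases j
    exacts [h0.symm, h1.symm]
  · rintro rfl
    exact ⟨0, by omega, rfl, rfl, fun j h0 h1 => by omega⟩

theorem sameHurwitzOrbit_iff_mem_orbit {s s' : Fin 2 → G} :
    SameHurwitzOrbit s s' ↔ s' ∈ orbit (zpowers (hurwitzPerm (G := G))) s := by
  rw [← eqvGen_apply_eq_iff_mem_orbit_zpowers]
  simp only [SameHurwitzOrbit, ← isHurwitzMove_iff_hurwitzPerm_eq]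

theorem hurwitzPerm_hurwitzPerm (s : Fin 2 → G) :
    hurwitzPerm (hurwitzPerm s) = fullTwist s ∘ s := by
  ext i
  fin_cases i <;> simp [hurwitzPerm, fullTwist, mul_assoc]

theorem fullTwist_hurwitzPerm (s : Fin 2 → G) : fullTwist (hurwitzPerm s) = fullTwist s := by
  simp [fullTwist, hurwitzPerm, mul_assoc]

theorem fullTwist_zpow_apply (s : Fin 2 → G) (n : ℤ) (x : G) :
    (fullTwist s ^ n) x = ((s 0 * s 1) ^ n)⁻¹ * x * (s 0 * s 1) ^ n := by
  rw [fullTwist, ← map_zpow, MulAut.conj_apply, _root_.inv_zpow, inv_inv]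

theorem fullTwist_zpow_apply_mul_fullTwist_zpow_apply (s : Fin 2 → G) (n : ℤ) :
    (fullTwist s ^ n) (s 0) * (fullTwist s ^ n) (s 1) = s 0 * s 1 := by
  rw [← map_mul, fullTwist_zpow_apply, mul_assoc, ((Commute.refl _).zpow_right n).eq,
    inv_mul_cancel_left]

theorem fullTwist_zpow_comp (s : Fin 2 → G) (n : ℤ) :
    fullTwist (⇑(fullTwist s ^ n) ∘ s) = fullTwist s := by
  rw [fullTwist, Function.comp_apply, Function.comp_apply,
    fullTwist_zpow_apply_mul_fullTwist_zpow_apply, fullTwist]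

theorem hurwitzPerm_zpow_two_mul (s : Fin 2 → G) (n : ℤ) :
    (hurwitzPerm ^ (2 * n)) s = ⇑(fullTwist s ^ n) ∘ s := by
  have twist (m : ℤ) :
      hurwitzPerm (hurwitzPerm (⇑(fullTwist s ^ m) ∘ s)) = ⇑(fullTwist s ^ (m + 1)) ∘ s := by
    rw [hurwitzPerm_hurwitzPerm, fullTwist_zpow_comp, add_comm, _root_.zpow_one_add]
    rfl
  have two_moves (u : Fin 2 → G) : (hurwitzPerm ^ (2 : ℤ)) u = hurwitzPerm (hurwitzPerm u) := rfl
  rw [_root_.zpow_mul]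
  induction n with
  | zero => rfl
  | succ n ih =>
    rw [← twist, ← two_moves, ← ih, ← Equiv.Perm.mul_apply, ← _root_.zpow_one_add, add_comm]
  | pred n ih =>
    apply (hurwitzPerm ^ (2 : ℤ)).injective
    rw [two_moves (_ ∘ s), twist, sub_add_cancel, ← ih, ← Equiv.Perm.mul_apply,
      ← _root_.zpow_one_add, add_sub_cancel]

theorem hurwitzPerm_zpow_two_mul_add_one (x y : G) (n : ℤ) :
    (hurwitzPerm ^ (2 * n + 1)) ![x, y] =
      ![(fullTwist ![x, y] ^ n) y, (fullTwist ![x, y] ^ (n + 1)) x] := by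
  have h : hurwitzPerm ![x, y] = ![y, fullTwist ![x, y] x] := by
    simp [hurwitzPerm, fullTwist, mul_assoc]
  rw [_root_.zpow_add_one, Equiv.Perm.mul_apply, hurwitzPerm_zpow_two_mul, fullTwist_hurwitzPerm, h,
    _root_.zpow_add_one]
  ext i
  fin_cases i <;> rfl

theorem appears_pair_iff {r x y : G} :
    Appears r ![x, y] ↔ r ∈ orbit (zpowers (fullTwist ![x, y])) x ∨
      r ∈ orbit (zpowers (fullTwist ![x, y])) y := by
  simp only [Appears, sameHurwitzOrbit_iff_mem_orbit, mem_orbit_zpowers_iff, MulAut.smul_def,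
    Equiv.Perm.smul_def]
  constructor
  · rintro ⟨_, ⟨m, rfl⟩, j, rfl⟩
    obtain ⟨n, rfl | rfl⟩ := m.even_or_odd'
    · rw [hurwitzPerm_zpow_two_mul]
      fin_cases j
      exacts [.inl ⟨n, rfl⟩, .inr ⟨n, rfl⟩]
    · rw [hurwitzPerm_zpow_two_mul_add_one]
      fin_cases j
      exacts [.inr ⟨n, rfl⟩, .inl ⟨n + 1, rfl⟩]
  · rintro (⟨n, rfl⟩ | ⟨n, rfl⟩)
    · exact ⟨_, ⟨2 * n, rfl⟩, 0, by rw [hurwitzPerm_zpow_two_mul]; rfl⟩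
    · exact ⟨_, ⟨2 * n, rfl⟩, 1, by rw [hurwitzPerm_zpow_two_mul]; rfl⟩

theorem isConj_fullTwist_zpow (s : Fin 2 → G) (n : ℤ) (x : G) :
    IsConj x ((fullTwist s ^ n) x) := by
  refine isConj_iff.2 ⟨((s 0 * s 1) ^ n)⁻¹, ?_⟩
  rw [fullTwist_zpow_apply, inv_inv]

theorem isConj_of_mem_orbit_fullTwist {s : Fin 2 → G} {x r : G}
    (hr : r ∈ orbit (zpowers (fullTwist s)) x) : IsConj x r := by
  obtain ⟨n, rfl⟩ := mem_orbit_zpowers_iff.1 hr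
  exact isConj_fullTwist_zpow s n x

-- An automorphism fixing `x * y` fixes `x` if and only if it fixes `y`.
theorem fullTwist_zpow_apply_left_eq_iff {x y : G} (n : ℤ) :
    (fullTwist ![x, y] ^ n) x = x ↔ (fullTwist ![x, y] ^ n) y = y := by
  have hprod : (fullTwist ![x, y] ^ n) x * (fullTwist ![x, y] ^ n) y = x * y :=
    fullTwist_zpow_apply_mul_fullTwist_zpow_apply ![x, y] n
  constructor <;> intro h
  · rwa [h, mul_right_inj] at hprod
  · rwa [h, mul_left_inj] at hprod

theorem period_fullTwist_right (x y : G) :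
    period (fullTwist ![x, y]) y = period (fullTwist ![x, y]) x := by
  refine Nat.dvd_right_iff_eq.1 fun n => ?_
  rw [← pow_smul_eq_iff_period_dvd, ← pow_smul_eq_iff_period_dvd, ← zpow_natCast]
  exact (fullTwist_zpow_apply_left_eq_iff n).symm

theorem hurwitzPerm_zpow_two_mul_pair_eq_iff {x y : G} (n : ℤ) :
    (hurwitzPerm ^ (2 * n)) ![x, y] = ![x, y] ↔ (fullTwist ![x, y] ^ n) x = x := by
  rw [hurwitzPerm_zpow_two_mul, funext_iff, Fin.forall_fin_two]
  exact and_iff_left_of_imp (fullTwist_zpow_apply_left_eq_iff n).1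

theorem hurwitzPerm_zpow_two_mul_add_one_pair_ne {x y : G} (hxy : ¬ IsConj x y) (n : ℤ) :
    (hurwitzPerm ^ (2 * n + 1)) ![x, y] ≠ ![x, y] := by
  rw [hurwitzPerm_zpow_two_mul_add_one]
  intro h
  have hy : (fullTwist ![x, y] ^ n) y = x := congrFun h 0
  exact hxy (hy ▸ isConj_fullTwist_zpow _ n y).symm

theorem period_hurwitzPerm {x y : G} (hxy : ¬ IsConj x y) :
    period (hurwitzPerm (G := G)) ![x, y] = 2 * period (fullTwist ![x, y]) x := by
  refine Nat.dvd_right_iff_eq.1 fun m => ?_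
  rw [← pow_smul_eq_iff_period_dvd, Equiv.Perm.smul_def]
  obtain ⟨n, rfl | rfl⟩ := m.even_or_odd'
  · rw [Nat.mul_dvd_mul_iff_left two_pos, ← pow_smul_eq_iff_period_dvd, MulAut.smul_def]
    exact_mod_cast hurwitzPerm_zpow_two_mul_pair_eq_iff (x := x) (y := y) n
  · refine iff_of_false ?_ fun h => ?_
    · exact_mod_cast hurwitzPerm_zpow_two_mul_add_one_pair_ne hxy n
    · have := (dvd_mul_right 2 _).trans h
      omega

theorem ncard_sameHurwitzOrbit_pair {x y : G} (hxy : ¬ IsConj x y) :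
    {s | SameHurwitzOrbit ![x, y] s}.ncard = 2 * period (fullTwist ![x, y]) x := by
  simp only [sameHurwitzOrbit_iff_mem_orbit, Set.ofPred_mem_eq, ncard_orbit_zpowers,
    period_hurwitzPerm hxy]

theorem ncard_isConj_left_and_appears {x y : G} (hxy : ¬ IsConj x y) :
    {r | IsConj x r ∧ Appears r ![x, y]}.ncard = period (fullTwist ![x, y]) x := by
  rw [← ncard_orbit_zpowers]
  congr 1
  ext r
  rw [Set.mem_ofPred_eq, appears_pair_iff]
  refine ⟨?_, fun hr => ⟨isConj_of_mem_orbit_fullTwist hr, .inl hr⟩⟩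
  rintro ⟨hxr, hr | hr⟩
  · exact hr
  · exact absurd (hxr.trans (isConj_of_mem_orbit_fullTwist hr).symm) hxy

theorem ncard_isConj_right_and_appears {x y : G} (hxy : ¬ IsConj x y) :
    {r | IsConj y r ∧ Appears r ![x, y]}.ncard = period (fullTwist ![x, y]) x := by
  rw [← period_fullTwist_right, ← ncard_orbit_zpowers]
  congr 1
  ext r
  rw [Set.mem_ofPred_eq, appears_pair_iff]
  refine ⟨?_, fun hr => ⟨isConj_of_mem_orbit_fullTwist hr, .inr hr⟩⟩
  rintro ⟨hyr, hr | hr⟩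
  · exact absurd ((isConj_of_mem_orbit_fullTwist hr).trans hyr.symm) hxy
  · exact hr

theorem fullTwist_pow_apply_left_eq_iff {x y : G} (n : ℕ) :
    (fullTwist ![x, y] ^ n) x = x ↔ Commute ((x * y) ^ n) x := by
  rw [fullTwist, ← map_pow, MulAut.conj_apply, mul_inv_eq_iff_eq_mul, inv_pow]
  exact Commute.inv_left_iff

theorem period_fullTwist_eq_prime {q : ℕ} [Fact q.Prime] {x y : G} (hxy : ¬ Commute x y)
    (hq : Commute ((x * y) ^ q) x) : period (fullTwist ![x, y]) x = q := by
  refine Function.minimalPeriod_eq_prime ?_ fun h => hxy ?_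
  · rw [isPeriodicPt_smul_iff]
    exact (fullTwist_pow_apply_left_eq_iff q).2 hq
  · have h1 : Commute ((x * y) ^ 1) x := (fullTwist_pow_apply_left_eq_iff 1).1 h
    have h2 : x * (y * x) = x * (x * y) := by simpa [mul_assoc] using h1.eq
    exact (mul_left_cancel h2).symm

end HurwitzPairs

section Relations

variable {G : Type*} [Group G] {a b : G}

/-- The defining relations of `G₅`, for a pair of elements of an arbitrary group; they are symmetric
in the two elements. -/
structure G5Relations (a b : G) : Prop where
  pow_three_left : a ^ 3 = 1
  pow_three_right : b ^ 3 = 1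
  braid : a * b * a * b = b * a * b * a

namespace G5Relations

theorem symm (h : G5Relations a b) : G5Relations b a :=
  ⟨h.pow_three_right, h.pow_three_left, h.braid.symm⟩

theorem sq_left (h : G5Relations a b) : a ^ 2 = a⁻¹ :=
  eq_inv_of_mul_eq_one_left (by rw [← pow_succ, h.pow_three_left])

theorem commute_braid_left (h : G5Relations a b) : Commute (a * b * a * b) a := by
  change a * b * a * b * a = a * (a * b * a * b)
  simp only [h.braid, ← mul_assoc]

theorem commute_braid_right (h : G5Relations a b) : Commute (a * b * a * b) b :=
  h.braid ▸ h.symm.commute_braid_left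

theorem commute_braid_sq_mul_inv (h : G5Relations a b) :
    Commute a ((a * b * a * b) ^ 2 * a⁻¹) :=
  (h.commute_braid_left.symm.pow_right 2).mul_right (Commute.refl a).inv_right

theorem braid_mem_center (h : G5Relations a b) (hgen : Subgroup.closure {a, b} = ⊤) :
    a * b * a * b ∈ Subgroup.center G := by
  rw [← Subgroup.centralizer_univ, ← Subgroup.coe_top, ← hgen, Subgroup.centralizer_closure]
  rintro g (rfl | rfl)
  · exact h.commute_braid_left.symm
  · exact h.commute_braid_right.symm

theorem conj_conj_left (h : G5Relations a b) : b * (a * b * a⁻¹) * b⁻¹ = a⁻¹ * b * a :=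
  calc b * (a * b * a⁻¹) * b⁻¹ = a⁻¹ * (a * b * a * b) * a⁻¹ * b⁻¹ := by group
    _ = a⁻¹ * b * a := by rw [h.braid]; group

theorem conj_conj_inv_left (h : G5Relations a b) :
    b * (a⁻¹ * b * a) * b⁻¹ = (a * b * a * b) ^ 2 * a⁻¹ := by
  have hcomm := h.commute_braid_right.mul_right h.commute_braid_left
  calc b * (a⁻¹ * b * a) * b⁻¹ = b * a * (a * b * a * b) * (b ^ 2)⁻¹ := by
        rw [← h.sq_left, sq]; group
    _ = (a * b * a * b) * (b * a) * (b ^ 2)⁻¹ := by rw [hcomm.eq]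
    _ = (a * b * a * b) * (b * a * b * a) * a⁻¹ := by rw [h.symm.sq_left]; group
    _ = (a * b * a * b) ^ 2 * a⁻¹ := by rw [← h.braid, sq]

theorem conj_braid_sq_mul_inv (h : G5Relations a b) :
    b * ((a * b * a * b) ^ 2 * a⁻¹) * b⁻¹ = a * b * a⁻¹ := by
  calc b * ((a * b * a * b) ^ 2 * a⁻¹) * b⁻¹ = b ^ 3 * (a * b * a⁻¹) * (b ^ 3)⁻¹ := by
        rw [← h.conj_conj_inv_left, ← h.conj_conj_left, pow_three]; group
    _ = a * b * a⁻¹ := by rw [h.pow_three_right]; group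

theorem mem_of_isConj_right (h : G5Relations a b) (hgen : Subgroup.closure {a, b} = ⊤) {u : G}
    (hu : IsConj b u) :
    u ∈ ({b, a * b * a⁻¹, a⁻¹ * b * a, (a * b * a * b) ^ 2 * a⁻¹} : Set G) := by
  have ha : a * (a * b * a⁻¹) * a⁻¹ = a⁻¹ * b * a := by
    calc a * (a * b * a⁻¹) * a⁻¹ = a ^ 2 * b * (a ^ 2)⁻¹ := by rw [sq]; group
      _ = a⁻¹ * b * a := by rw [h.sq_left, inv_inv]
  refine mem_of_isConj_of_closure_eq_top hgen (Set.toFinite _) ?_ (.inl rfl) hu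
  simp only [Set.forall_mem_insert, Set.mem_singleton_iff, forall_eq]
  refine ⟨⟨?_, ?_, ?_, ?_⟩, ?_, ?_, ?_, ?_⟩
  · exact .inr (.inl rfl)
  · exact .inr (.inr (.inl ha))
  · exact .inl (by group)
  · exact .inr (.inr (.inr (mul_inv_eq_of_eq_mul h.commute_braid_sq_mul_inv.eq)))
  · exact .inl (mul_inv_cancel_right b b)
  · exact .inr (.inr (.inl h.conj_conj_left))
  · exact .inr (.inr (.inr h.conj_conj_inv_left))
  · exact .inr (.inl h.conj_braid_sq_mul_inv)

theorem commute_or_conj_eq_of_isConj_right (h : G5Relations a b)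
    (hgen : Subgroup.closure {a, b} = ⊤) {u : G} (hu : IsConj b u) :
    Commute a u ∨ ∃ g, g * a * g⁻¹ = a ∧ g * b * g⁻¹ = u := by
  obtain rfl | rfl | rfl | rfl := h.mem_of_isConj_right hgen hu
  · exact .inr ⟨1, by group, by group⟩
  · exact .inr ⟨a, by group, rfl⟩
  · exact .inr ⟨a⁻¹, by group, by group⟩
  · exact .inl h.commute_braid_sq_mul_inv

theorem commute_or_conj_eq (h : G5Relations a b) (hgen : Subgroup.closure {a, b} = ⊤) {t u : G}
    (ht : IsConj a t) (hu : IsConj b u) :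
    Commute t u ∨ ∃ g, g * a * g⁻¹ = t ∧ g * b * g⁻¹ = u := by
  obtain ⟨k, rfl⟩ := isConj_iff.1 ht
  have hu' : IsConj b (k⁻¹ * u * k) := hu.trans (isConj_iff.2 ⟨k⁻¹, by group⟩)
  obtain hcomm | ⟨g, hga, hgb⟩ := h.commute_or_conj_eq_of_isConj_right hgen hu'
  · left
    simpa [mul_assoc] using hcomm.map (MulAut.conj k)
  · refine .inr ⟨k * g, ?_, ?_⟩
    · calc k * g * a * (k * g)⁻¹ = k * (g * a * g⁻¹) * k⁻¹ := by group
        _ = k * a * k⁻¹ := by rw [hga]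
    · calc k * g * b * (k * g)⁻¹ = k * (g * b * g⁻¹) * k⁻¹ := by group
        _ = u := by rw [hgb]; group

theorem mul_sq_pow_three_mem_center (h : G5Relations a b) (hgen : Subgroup.closure {a, b} = ⊤) :
    (a * b ^ 2) ^ 3 ∈ Subgroup.center G := by
  have hz := h.braid_mem_center hgen
  have hfactor : a * b ^ 2 = (a * b * a * b)⁻¹ * (a⁻¹ * b * a) := by
    calc a * b ^ 2 = (a * b * a * b)⁻¹ * (a * b * a * b * a) * b⁻¹ := by
          rw [h.symm.sq_left]; group
      _ = (a * b * a * b)⁻¹ * (a ^ 2 * b * a) := by rw [h.commute_braid_left.eq]; group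
      _ = (a * b * a * b)⁻¹ * (a⁻¹ * b * a) := by rw [h.sq_left]
  have hcube : (a⁻¹ * b * a) ^ 3 = 1 := by
    simpa [h.pow_three_right] using conj_pow (a := a⁻¹) (b := b) (i := 3)
  have hcomm : Commute (a * b * a * b)⁻¹ (a⁻¹ * b * a) :=
    Commute.inv_left (Subgroup.mem_center_iff.1 hz _).symm
  rw [hfactor, hcomm.mul_pow, hcube, mul_one]
  exact pow_mem (inv_mem hz) 3

theorem mul_pow_three_mem_center (h : G5Relations a b) (hgen : Subgroup.closure {a, b} = ⊤)
    {t v : G} (ht : IsConj a t) (hv : IsConj (b ^ 2) v) (hcomm : ¬ Commute t v) :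
    (t * v) ^ 3 ∈ Subgroup.center G := by
  obtain ⟨k, rfl⟩ := isConj_iff.1 hv
  rw [← conj_pow] at hcomm ⊢
  obtain hc | ⟨g, rfl, hg⟩ := h.commute_or_conj_eq hgen ht (isConj_iff.2 ⟨k, rfl⟩)
  · exact absurd (hc.pow_right 2) hcomm
  · have hprod : g * a * g⁻¹ * (g * b * g⁻¹) ^ 2 = g * (a * b ^ 2) * g⁻¹ := by
      rw [conj_pow]; group
    rw [← hg, hprod, conj_pow]
    exact Subgroup.Normal.conj_mem inferInstance _ (h.mul_sq_pow_three_mem_center hgen) g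

theorem ncard_hurwitzOrbit_and_ncard_entries (h : G5Relations a b)
    (hgen : Subgroup.closure {a, b} = ⊤) (hab : ¬ IsConj a (b ^ 2)) {t v : G} (ht : IsConj a t)
    (hv : IsConj (b ^ 2) v) (hcomm : ¬ Commute t v) :
    {s | SameHurwitzOrbit ![t, v] s}.ncard = 6 ∧
    {r | IsConj a r ∧ Appears r ![t, v]}.ncard = 3 ∧
    {r | IsConj (b ^ 2) r ∧ Appears r ![t, v]}.ncard = 3 := by
  have htv : ¬ IsConj t v := fun htv => hab ((ht.trans htv).trans hv.symm)
  have hcentral := h.mul_pow_three_mem_center hgen ht hv hcomm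
  have hperiod : MulAction.period (fullTwist ![t, v]) t = 3 :=
    period_fullTwist_eq_prime hcomm (Subgroup.mem_center_iff.1 hcentral t).symm
  have hclass_a (r : G) : IsConj a r ↔ IsConj t r := ⟨ht.symm.trans, ht.trans⟩
  have hclass_b (r : G) : IsConj (b ^ 2) r ↔ IsConj v r := ⟨hv.symm.trans, hv.trans⟩
  simp only [hclass_a, hclass_b, ncard_sameHurwitzOrbit_pair htv, ncard_isConj_left_and_appears htv,
    ncard_isConj_right_and_appears htv, hperiod, Nat.reduceMul, and_self]

end G5Relations

end Relations

section G5

theorem g5Relations_ga_gb : G5Relations ga gb where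
  pow_three_left := PresentedGroup.one_of_mem (rels := g5Rels) (.inl rfl)
  pow_three_right := PresentedGroup.one_of_mem (rels := g5Rels) (.inr (.inl rfl))
  braid := mul_inv_eq_one.1 (PresentedGroup.one_of_mem (rels := g5Rels) (.inr (.inr rfl)))

/-- The homomorphism from `G₅` to the cyclic group of order three sending `a` to a generator and `b`
to `1`; it separates the conjugacy classes of the powers of `a` from those of the powers of `b`. -/
def expA : G5 →* Multiplicative (ZMod 3) :=
  PresentedGroup.toGroup (f := ![Multiplicative.ofAdd 1, 1]) (by
    rintro r (rfl | rfl | rfl) <;> rfl)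

theorem expA_ga : expA ga = Multiplicative.ofAdd 1 := PresentedGroup.toGroup.of _

theorem expA_gb : expA gb = 1 := PresentedGroup.toGroup.of _

theorem expA_eq_of_isConj {x y : G5} (hxy : IsConj x y) : expA x = expA y :=
  isConj_iff_eq.1 (expA.map_isConj hxy)

theorem not_isConj_ga_gb_sq : ¬ IsConj ga (gb ^ 2) := fun h => by
  have := expA_eq_of_isConj h
  rw [map_pow, expA_ga, expA_gb] at this
  exact absurd this (by decide)

theorem not_isConj_gb_ga_sq : ¬ IsConj gb (ga ^ 2) := fun h => by
  have := expA_eq_of_isConj h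
  rw [map_pow, expA_ga, expA_gb] at this
  exact absurd this (by decide)

end G5

theorem g5_nonadjacent_classes_pair_orbit (Ri Rj : Set G5)
    (h : (Ri = S1 ∧ Rj = S4) ∨ (Ri = S2 ∧ Rj = S3))
    (t₁ t₄ : G5) (h₁ : t₁ ∈ Ri) (h₄ : t₄ ∈ Rj) (hcomm : ¬ Commute t₁ t₄) :
    {s : Fin 2 → G5 | SameHurwitzOrbit ![t₁, t₄] s}.ncard = 6 ∧
    {r : G5 | r ∈ Ri ∧ Appears r ![t₁, t₄]}.ncard = 3 ∧
    {r : G5 | r ∈ Rj ∧ Appears r ![t₁, t₄]}.ncard = 3 := by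
  obtain ⟨rfl, rfl⟩ | ⟨rfl, rfl⟩ := h
  · exact g5Relations_ga_gb.ncard_hurwitzOrbit_and_ncard_entries
      closure_ga_gb not_isConj_ga_gb_sq h₁ h₄ hcomm
  · exact g5Relations_ga_gb.symm.ncard_hurwitzOrbit_and_ncard_entries
      (Set.pair_comm ga gb ▸ closure_ga_gb) not_isConj_gb_ga_sq h₁ h₄ hcomm
end
end

section
/- Every tuple of reflections of G5 that contains at least three entries from a single conjugacy class R_i and at least two further entries (from any combination of conjugacy classes) has, in its Hurwitz orbit, a tuple with two consecutive equal entries both lying in R_i. -/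
noncomputable section

open Matrix Complex

/-!
Three features of a reflection class `R` of `G5` suffice: it is stable under conjugation, it has at
most four elements, and any two of its elements satisfy the braid relation `xyx = yxy`.
Write `x ^ y = y⁻¹ * x * y`. By the braid relation the pairs `(a, b)`, `(b, d)` and `(d, a)`, where
`d = a ^ b`, are Hurwitz equivalent. So a triple `(a, b, c)` in `R` leads to an equal pair unless
`c` is the fourth element of `R`, the one other than `a`, `b` and `d`; this fourth element is
`a ^ d`. Let `u` be any further entry. Moving `u` to the left of `(a, b, c)`, past `c` by a Hurwitz
move and past `a` and `b` by inverse moves, replaces `c` by `c ^ u`, so `c ^ u = c`. Then `u` and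
`c` commute, and moving `u` past `b` by a Hurwitz move as well turns the triple into
`(a, b ^ u, c)`. This leads to an equal pair if `b ^ u = a`, and also if `b ^ u = d`, because
`a ^ d = c`. Hence `b ^ u = b`, and `u` centralizes `R`, which is generated by `b` and `c`. In `G5`
only central elements centralize a reflection class, so one further noncentral entry is enough.
-/

section Hurwitz

variable {G : Type*} [Group G]

/-- Equivalence of lists under Hurwitz moves. Moves act at the head and are carried to other
positions by `cons`, as in `List.Perm`. -/
inductive HurwitzEquiv : List G → List G → Prop
  | refl (L : List G) : HurwitzEquiv L L
  | swap (x y : G) (L : List G) : HurwitzEquiv (x :: y :: L) (y :: (y⁻¹ * x * y) :: L)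
  | cons (x : G) {L L' : List G} : HurwitzEquiv L L' → HurwitzEquiv (x :: L) (x :: L')
  | symm {L L' : List G} : HurwitzEquiv L L' → HurwitzEquiv L' L
  | trans {L L' L'' : List G} : HurwitzEquiv L L' → HurwitzEquiv L' L'' → HurwitzEquiv L L''

namespace HurwitzEquiv

theorem swap_inv (x y : G) (L : List G) :
    HurwitzEquiv (x :: y :: L) ((x * y * x⁻¹) :: x :: L) := by
  simpa [mul_assoc] using (swap (x * y * x⁻¹) x L).symm

theorem length_eq {L L' : List G} (h : HurwitzEquiv L L') : L.length = L'.length := by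
  induction h with
  | refl | swap => rfl
  | cons _ _ ih => exact congrArg Nat.succ ih
  | symm _ ih => exact ih.symm
  | trans _ _ ih₁ ih₂ => exact ih₁.trans ih₂

theorem countP_eq {p : G → Bool} (hp : ∀ g x, p (g⁻¹ * x * g) = p x) {L L' : List G}
    (h : HurwitzEquiv L L') : L.countP p = L'.countP p := by
  induction h with
  | refl => rfl
  | swap x y L => simp only [List.countP_cons, hp, Nat.add_right_comm]
  | cons x _ ih => simp only [List.countP_cons, ih]
  | symm _ ih => exact ih.symm
  | trans _ _ ih₁ ih₂ => exact ih₁.trans ih₂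

theorem exists_cons_of_mem {x : G} {L : List G} (hx : x ∈ L) :
    ∃ L', HurwitzEquiv L (x :: L') := by
  induction L with
  | nil => cases hx
  | cons y L ih =>
    rcases List.mem_cons.mp hx with rfl | hx
    · exact ⟨L, refl _⟩
    · obtain ⟨L', h⟩ := ih hx
      exact ⟨_, (h.cons y).trans (swap y x L')⟩

theorem exists_cons_of_countP {p q : G → Bool} (hp : ∀ g x, p (g⁻¹ * x * g) = p x)
    (hq : ∀ g x, q (g⁻¹ * x * g) = q x) {m n : ℕ} {L : List G} (hm : m + 1 ≤ L.countP p)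
    (hn : n + 1 ≤ L.countP q) :
    ∃ x L', HurwitzEquiv L (x :: L') ∧ p x = true ∧ m ≤ L'.countP p ∧ n ≤ L'.countP q := by
  obtain ⟨x, hxL, hx⟩ := List.countP_pos_iff.mp (Nat.zero_lt_of_lt hm)
  obtain ⟨L', h⟩ := exists_cons_of_mem hxL
  rw [h.countP_eq hp, List.countP_cons] at hm
  rw [h.countP_eq hq, List.countP_cons] at hn
  exact ⟨x, L', h, hx, by split at hm <;> omega, by split at hn <;> omega⟩

end HurwitzEquiv

theorem IsHurwitzMove.cons {k : ℕ} {s t : Fin k → G} (x : G) (h : IsHurwitzMove s t) :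
    IsHurwitzMove (Fin.cons x s : Fin (k + 1) → G) (Fin.cons x t : Fin (k + 1) → G) := by
  obtain ⟨i, hi, hleft, hright, hrest⟩ := h
  refine ⟨i + 1, Nat.succ_lt_succ hi, hleft, hright, Fin.cases (fun _ _ => rfl) ?_⟩
  intro j hj hj'
  exact hrest j (fun h => hj (congrArg Nat.succ h)) (fun h => hj' (congrArg Nat.succ h))

theorem SameHurwitzOrbit.cons {k : ℕ} {s t : Fin k → G} (x : G) (h : SameHurwitzOrbit s t) :
    SameHurwitzOrbit (Fin.cons x s : Fin (k + 1) → G) (Fin.cons x t : Fin (k + 1) → G) := by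
  induction h with
  | rel _ _ h => exact .rel _ _ (h.cons x)
  | refl _ => exact .refl _
  | symm _ _ _ ih => exact .symm _ _ ih
  | trans _ _ _ _ _ ih₁ ih₂ => exact .trans _ _ _ ih₁ ih₂

theorem isHurwitzMove_cons_cons {k : ℕ} (x y : G) (s : Fin k → G) :
    IsHurwitzMove (Fin.cons x (Fin.cons y s : Fin (k + 1) → G) : Fin (k + 2) → G)
      (Fin.cons y (Fin.cons (y⁻¹ * x * y) s : Fin (k + 1) → G) : Fin (k + 2) → G) := by
  refine ⟨0, by omega, rfl, rfl, Fin.cases (fun h => absurd rfl h) ?_⟩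
  exact Fin.cases (fun _ h => absurd rfl h) (fun _ _ _ => rfl)

theorem HurwitzEquiv.sameHurwitzOrbit {L L' : List G} (h : HurwitzEquiv L L') {k : ℕ}
    {s t : Fin k → G} (hs : List.ofFn s = L) (ht : List.ofFn t = L') : SameHurwitzOrbit s t := by
  induction h generalizing k with
  | refl L =>
    obtain rfl := List.ofFn_injective (hs.trans ht.symm)
    exact .refl _
  | swap x y L =>
    obtain rfl : k = L.length + 2 := by simpa using congrArg List.length hs
    obtain rfl : s = Fin.cons x (Fin.cons y L.get) := List.ofFn_injective (by rw [hs]; simp)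
    obtain rfl : t = Fin.cons y (Fin.cons (y⁻¹ * x * y) L.get) :=
      List.ofFn_injective (by rw [ht]; simp)
    exact .rel _ _ (isHurwitzMove_cons_cons x y L.get)
  | @cons x L _ _ ih =>
    obtain rfl : k = L.length + 1 := by simpa using congrArg List.length hs
    obtain rfl : s = Fin.cons x L.get := List.ofFn_injective (by rw [hs]; simp)
    rw [List.ofFn_succ, List.cons.injEq] at ht
    rw [← Fin.cons_self_tail t, ht.1]
    exact (ih (List.ofFn_get L) ht.2).cons x
  | symm _ ih => exact .symm _ _ (ih ht hs)
  | @trans L₁ L₂ L₃ h₁ _ ih₁ ih₂ =>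
    have hlen : L₂.length = k := by rw [← h₁.length_eq, ← hs, List.length_ofFn]
    subst hlen
    exact .trans _ _ _ (ih₁ hs (List.ofFn_get L₂)) (ih₂ (List.ofFn_get L₂) ht)

/-- `L` is Hurwitz equivalent to a list with two consecutive equal entries lying in `R`. -/
def HasHurwitzPair (R : Set G) (L : List G) : Prop :=
  ∃ l₁ l₂ x, x ∈ R ∧ HurwitzEquiv L (l₁ ++ x :: x :: l₂)

namespace HasHurwitzPair

variable {R : Set G} {L L' : List G}

theorem of_equiv (h : HurwitzEquiv L L') : HasHurwitzPair R L' → HasHurwitzPair R L :=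
  fun ⟨l₁, l₂, x, hx, hL⟩ => ⟨l₁, l₂, x, hx, h.trans hL⟩

theorem cons (x : G) : HasHurwitzPair R L → HasHurwitzPair R (x :: L) :=
  fun ⟨l₁, l₂, y, hy, hL⟩ => ⟨x :: l₁, l₂, y, hy, hL.cons x⟩

theorem cons_cons_self {x : G} (hx : x ∈ R) (L : List G) : HasHurwitzPair R (x :: x :: L) :=
  ⟨[], L, x, hx, .refl _⟩

theorem exists_tuple {k : ℕ} {t : Fin k → G} (h : HasHurwitzPair R (List.ofFn t)) :
    ∃ s : Fin k → G, SameHurwitzOrbit t s ∧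
      ∃ i : ℕ, ∃ h : i + 1 < k,
        s ⟨i, Nat.lt_of_succ_lt h⟩ = s ⟨i + 1, h⟩ ∧ s ⟨i + 1, h⟩ ∈ R := by
  obtain ⟨l₁, l₂, x, hx, hL⟩ := h
  obtain rfl : k = (l₁ ++ x :: x :: l₂).length := by rw [← hL.length_eq, List.length_ofFn]
  refine ⟨_, hL.sameHurwitzOrbit rfl (List.ofFn_get _), l₁.length, by simp, ?_, ?_⟩
  · simp
  · simpa using hx

end HasHurwitzPair

theorem ncard_setOf_eq_countP_ofFn {α : Type*} {k : ℕ} (t : Fin k → α) (p : α → Prop)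
    [DecidablePred p] : {i | p (t i)}.ncard = (List.ofFn t).countP (fun x => decide (p x)) := by
  have hfilter : {i | p (t i)} =
      ((List.finRange k).filter (fun i => decide (p (t i)))).toFinset := by ext; simp
  rw [hfilter, Set.ncard_coe_finset,
    List.toFinset_card_of_nodup ((List.nodup_finRange k).filter _), List.ofFn_eq_map,
    List.countP_map, List.countP_eq_length_filter]
  rfl

end Hurwitz

section BraidClass

variable {G : Type*} [Group G] {R : Set G}

/-- A conjugation-stable set of at most four elements, any two of which satisfy the braid relation.
Each reflection class of `G5` is one: its elements correspond to the vertices of a tetrahedron, on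
which conjugation acts by rotations. -/
structure IsSmallBraidClass (R : Set G) : Prop where
  conj_mem : ∀ g, ∀ x ∈ R, g⁻¹ * x * g ∈ R
  braid : ∀ x ∈ R, ∀ y ∈ R, x * y * x = y * x * y
  encard_le : R.encard ≤ 4

namespace IsSmallBraidClass

theorem conj_mem_iff (hR : IsSmallBraidClass R) (g x : G) : g⁻¹ * x * g ∈ R ↔ x ∈ R :=
  ⟨fun h => by simpa [mul_assoc] using hR.conj_mem g⁻¹ _ h, hR.conj_mem g x⟩

theorem conj_mem_centralizer_iff (hR : IsSmallBraidClass R) (g x : G) :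
    g⁻¹ * x * g ∈ Subgroup.centralizer R ↔ x ∈ Subgroup.centralizer R := by
  have hconj (h y : G) (hy : y ∈ Subgroup.centralizer R) :
      h⁻¹ * y * h ∈ Subgroup.centralizer R := by
    rw [Subgroup.mem_centralizer_iff] at hy ⊢
    intro r hr
    have := hy _ (hR.conj_mem h⁻¹ r hr)
    simp only [inv_inv] at this
    calc r * (h⁻¹ * y * h) = h⁻¹ * (h * r * h⁻¹ * y) * h := by group
      _ = h⁻¹ * y * h * r := by rw [this]; group
  exact ⟨fun h => by simpa [mul_assoc] using hconj g⁻¹ _ h, hconj g x⟩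

theorem eq_of_commute (hR : IsSmallBraidClass R) {x y : G} (hx : x ∈ R) (hy : y ∈ R)
    (h : Commute x y) : x = y := by
  have hbraid := hR.braid x hx y hy
  rwa [h.eq, mul_assoc, mul_assoc, mul_right_inj, mul_right_inj] at hbraid

theorem conj_conj_eq (hR : IsSmallBraidClass R) {a b : G} (ha : a ∈ R) (hb : b ∈ R) :
    (b⁻¹ * a * b)⁻¹ * b * (b⁻¹ * a * b) = a :=
  calc (b⁻¹ * a * b)⁻¹ * b * (b⁻¹ * a * b) = b⁻¹ * a⁻¹ * (b * a * b) := by group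
    _ = b⁻¹ * a⁻¹ * (a * b * a) := by rw [hR.braid a ha b hb]
    _ = a := by group

theorem hurwitzEquiv_rotate (hR : IsSmallBraidClass R) {a b : G} (ha : a ∈ R) (hb : b ∈ R)
    (L : List G) : HurwitzEquiv (a :: b :: L) ((b⁻¹ * a * b) :: a :: L) := by
  simpa only [hR.conj_conj_eq ha hb] using
    (HurwitzEquiv.swap a b L).trans (.swap b (b⁻¹ * a * b) L)

theorem conj_ne_left (hR : IsSmallBraidClass R) {a b : G} (ha : a ∈ R) (hb : b ∈ R)
    (hab : a ≠ b) : b⁻¹ * a * b ≠ a := by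
  intro h
  exact hab (hR.eq_of_commute ha hb (by rwa [mul_assoc, inv_mul_eq_iff_eq_mul] at h))

theorem subsingleton_diff (hR : IsSmallBraidClass R) {a b : G} (ha : a ∈ R) (hb : b ∈ R)
    (hab : a ≠ b) : (R \ {a, b, b⁻¹ * a * b}).Subsingleton := by
  have hba : b⁻¹ * a * b ≠ b := fun h => hab (by simpa [mul_assoc, inv_mul_eq_iff_eq_mul] using h)
  have hthree : ({a, b, b⁻¹ * a * b} : Set G).encard = 3 :=
    Set.encard_eq_three.mpr ⟨_, _, _, hab, (hR.conj_ne_left ha hb hab).symm, hba.symm, rfl⟩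
  have hsub : {a, b, b⁻¹ * a * b} ⊆ R := by
    rintro x (rfl | rfl | rfl)
    exacts [ha, hb, hR.conj_mem _ _ ha]
  rw [← Set.encard_le_one_iff_subsingleton, ← ENat.add_le_add_iff_right (k := 3) (by decide),
    ← hthree, Set.encard_sdiff_add_encard_of_subset hsub, hthree]
  exact hR.encard_le

/-- Conjugation by `d = b⁻¹ * a * b` sends `b` to `a`. If it sent `a` back to `b`, it would fix the
fourth element of `R`, which would then commute with `d`. -/
theorem eq_conj_conj_of_mem_diff (hR : IsSmallBraidClass R) {a b c : G} (ha : a ∈ R) (hb : b ∈ R)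
    (hab : a ≠ b) (hc : c ∈ R \ {a, b, b⁻¹ * a * b}) :
    c = (b⁻¹ * a * b)⁻¹ * a * (b⁻¹ * a * b) := by
  have hsub := hR.subsingleton_diff ha hb hab
  have hrot := hR.conj_conj_eq ha hb
  have had := hR.conj_ne_left ha hb hab
  have hd := hR.conj_mem b a ha
  generalize b⁻¹ * a * b = d at *
  obtain ⟨hcR, hcabd⟩ := hc
  simp only [Set.mem_insert_iff, Set.mem_singleton_iff, not_or] at hcabd
  obtain ⟨hca, hcb, hcd⟩ := hcabd
  have hinj {x y : G} (h : d⁻¹ * x * d = d⁻¹ * y * d) : x = y := by simpa using h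
  have hdd : d⁻¹ * d * d = d := by simp
  refine hsub ⟨hcR, by simp [hca, hcb, hcd]⟩ ⟨hR.conj_mem d a ha, ?_⟩
  rintro (h | h | h)
  · exact hR.conj_ne_left ha hd had.symm h
  · refine hR.conj_ne_left hcR hd hcd (hsub ⟨hR.conj_mem d c hcR, ?_⟩ ⟨hcR, by simp [*]⟩)
    rintro (h' | h' | h')
    · exact hcb (hinj (h'.trans hrot.symm))
    · exact hca (hinj (h'.trans h.symm))
    · exact hcd (hinj (h'.trans hdd.symm))
  · exact had (hinj (h.trans hdd.symm)).symm

theorem mem_centralizer_of_commute (hR : IsSmallBraidClass R) {b c u : G} (hb : b ∈ R)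
    (hc : c ∈ R) (hbc : b ≠ c) (hub : Commute b u) (huc : Commute c u) :
    u ∈ Subgroup.centralizer R := by
  have hud : Commute (c⁻¹ * b * c) u := (huc.inv_left.mul_left hub).mul_left huc
  rw [Subgroup.mem_centralizer_iff]
  intro x hx
  by_cases hmem : x ∈ ({b, c, c⁻¹ * b * c} : Set G)
  · rcases hmem with rfl | rfl | rfl
    exacts [hub, huc, hud]
  · rw [hR.eq_conj_conj_of_mem_diff hb hc hbc ⟨hx, hmem⟩]
    exact (hud.inv_left.mul_left hub).mul_left hud

theorem hasHurwitzPair_or_mem_diff (hR : IsSmallBraidClass R) {a b c : G} (ha : a ∈ R)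
    (hb : b ∈ R) (hc : c ∈ R) (L : List G) :
    HasHurwitzPair R (a :: b :: c :: L) ∨ a ≠ b ∧ c ∈ R \ {a, b, b⁻¹ * a * b} := by
  by_cases hab : a = b
  · subst hab
    exact .inl (.cons_cons_self ha _)
  by_cases hmem : c ∈ ({a, b, b⁻¹ * a * b} : Set G)
  · left
    rcases hmem with rfl | rfl | rfl
    · exact .of_equiv (hR.hurwitzEquiv_rotate ha hb _) (.cons _ (.cons_cons_self ha L))
    · exact .cons _ (.cons_cons_self hb L)
    · exact .of_equiv (.swap a b _) (.cons _ (.cons_cons_self hc L))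
  · exact .inr ⟨hab, hc, hmem⟩

theorem hasHurwitzPair_of_notMem_centralizer (hR : IsSmallBraidClass R) {a b c u : G} (ha : a ∈ R)
    (hb : b ∈ R) (hc : c ∈ R) (hu : u ∉ Subgroup.centralizer R) (L : List G) :
    HasHurwitzPair R (a :: b :: c :: u :: L) := by
  by_contra hpair
  obtain ⟨hab, hcabd⟩ := (hR.hasHurwitzPair_or_mem_diff ha hb hc _).resolve_left hpair
  have hbc : b ≠ c := fun h => hcabd.2 (by simp [h])
  have hcu : u⁻¹ * c * u = c := by
    have hequiv := (((HurwitzEquiv.swap c u L).cons b).cons a).trans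
      (((HurwitzEquiv.swap_inv b u _).cons a).trans (.swap_inv a _ _))
    exact hR.subsingleton_diff ha hb hab
      ((hR.hasHurwitzPair_or_mem_diff ha hb (hR.conj_mem u c hc) _).resolve_left
        fun h => hpair (.of_equiv hequiv (h.cons _))).2 hcabd
  have hbu : u⁻¹ * b * u = b := by
    have hequiv := (((HurwitzEquiv.swap c u L).cons b).cons a).trans
      (((HurwitzEquiv.swap b u _).cons a).trans (.swap_inv a u _))
    rw [hcu] at hequiv
    obtain ⟨habu, hcabu⟩ :=
      (hR.hasHurwitzPair_or_mem_diff ha (hR.conj_mem u b hb) hc L).resolve_left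
        fun h => hpair (.of_equiv hequiv (h.cons _))
    by_contra hne
    have hbuc : u⁻¹ * b * u ≠ c := fun h => hbc (by simpa using h.trans hcu.symm)
    have hbud : u⁻¹ * b * u ≠ b⁻¹ * a * b := fun h =>
      hcabu.2 (.inr (.inr (h ▸ hR.eq_conj_conj_of_mem_diff ha hb hab hcabd)))
    exact hbuc (hR.subsingleton_diff ha hb hab
      ⟨hR.conj_mem u b hb, by simp [habu.symm, hne, hbud]⟩ hcabd)
  have hcomm {x : G} (h : u⁻¹ * x * u = x) : Commute x u := by
    rwa [mul_assoc, inv_mul_eq_iff_eq_mul] at h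
  exact hu (hR.mem_centralizer_of_commute hb hc hbc (hcomm hbu) (hcomm hcu))

open Classical in
theorem hasHurwitzPair_of_countP (hR : IsSmallBraidClass R) {L : List G}
    (h3 : 3 ≤ L.countP (fun x => decide (x ∈ R)))
    (h4 : 4 ≤ L.countP (fun x => decide (x ∉ Subgroup.centralizer R))) : HasHurwitzPair R L := by
  have hp (g x : G) : decide (g⁻¹ * x * g ∈ R) = decide (x ∈ R) :=
    decide_eq_decide.mpr (hR.conj_mem_iff g x)
  have hq (g x : G) : decide (g⁻¹ * x * g ∉ Subgroup.centralizer R) =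
      decide (x ∉ Subgroup.centralizer R) :=
    decide_eq_decide.mpr (hR.conj_mem_centralizer_iff g x).not
  obtain ⟨a, L₁, hL₁, ha, h3, h4⟩ := HurwitzEquiv.exists_cons_of_countP hp hq h3 h4
  obtain ⟨b, L₂, hL₂, hb, h3, h4⟩ := HurwitzEquiv.exists_cons_of_countP hp hq h3 h4
  obtain ⟨c, L₃, hL₃, hc, -, h4⟩ := HurwitzEquiv.exists_cons_of_countP hp hq h3 h4
  obtain ⟨u, hu, huR⟩ := List.countP_pos_iff.mp (Nat.lt_of_succ_le h4)
  obtain ⟨L₄, hL₄⟩ := HurwitzEquiv.exists_cons_of_mem hu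
  have hL := hL₁.trans ((hL₂.trans ((hL₃.trans (hL₄.cons c)).cons b)).cons a)
  exact .of_equiv hL (hR.hasHurwitzPair_of_notMem_centralizer (of_decide_eq_true ha)
    (of_decide_eq_true hb) (of_decide_eq_true hc) (of_decide_eq_true huR) L₄)

theorem exists_sameHurwitzOrbit_pair (hR : IsSmallBraidClass R) {k : ℕ} (t : Fin k → G)
    (h3 : 3 ≤ {i | t i ∈ R}.ncard) (h4 : 4 ≤ {i | t i ∉ Subgroup.centralizer R}.ncard) :
    ∃ s : Fin k → G, SameHurwitzOrbit t s ∧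
      ∃ i : ℕ, ∃ h : i + 1 < k,
        s ⟨i, Nat.lt_of_succ_lt h⟩ = s ⟨i + 1, h⟩ ∧ s ⟨i + 1, h⟩ ∈ R := by
  classical
  rw [ncard_setOf_eq_countP_ofFn t (· ∈ R)] at h3
  rw [ncard_setOf_eq_countP_ofFn t (· ∉ Subgroup.centralizer R)] at h4
  exact (hR.hasHurwitzPair_of_countP h3 h4).exists_tuple

end IsSmallBraidClass

end BraidClass

section G5Pair

variable {G : Type*} [Group G] {x y : G}

/-- `x` and `y` generate the group and satisfy the defining relations of `G5`. The relations are
unchanged by exchanging `x` and `y` and by inverting both, which carries the class of `a` to each of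
the four reflection classes. -/
structure IsG5Pair_s14 (x y : G) : Prop where
  pow_left : x ^ 3 = 1
  pow_right : y ^ 3 = 1
  braid : x * y * x * y = y * x * y * x
  closure_eq_top : Subgroup.closure {x, y} = ⊤

/-- The four conjugates of `x` that make up its conjugacy class when `IsG5Pair x y` holds.
Conjugation by `y` rotates the first three and fixes the last. -/
def tetrahedron (x y : G) : Set G :=
  {x, y⁻¹ * x * y, y * x * y⁻¹, x⁻¹ * (y * x * y⁻¹) * x}

theorem encard_tetrahedron_le (x y : G) : (tetrahedron x y).encard ≤ 4 := by
  grw [tetrahedron, Set.encard_insert_le, Set.encard_insert_le, Set.encard_insert_le,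
    Set.encard_singleton]
  norm_num

namespace IsG5Pair_s14

theorem swap (h : IsG5Pair_s14 x y) : IsG5Pair_s14 y x :=
  ⟨h.pow_right, h.pow_left, h.braid.symm, by rw [Set.pair_comm, h.closure_eq_top]⟩

theorem inv (h : IsG5Pair_s14 x y) : IsG5Pair_s14 x⁻¹ y⁻¹ where
  pow_left := by rw [inv_pow, h.pow_left, inv_one]
  pow_right := by rw [inv_pow, h.pow_right, inv_one]
  braid := by simpa [mul_assoc] using congrArg (·⁻¹) h.braid.symm
  closure_eq_top := by
    rw [← Set.inv_singleton, ← Set.inv_insert, Subgroup.closure_inv, h.closure_eq_top]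

theorem inv_left (h : IsG5Pair_s14 x y) : x⁻¹ = x * x := by
  rw [inv_eq_iff_mul_eq_one, ← mul_assoc, ← pow_three', h.pow_left]

theorem mem_center_of_commute (h : IsG5Pair_s14 x y) {g : G} (hx : Commute x g) (hy : Commute y g) :
    g ∈ Subgroup.center G := by
  have hle : Subgroup.closure {x, y} ≤ Subgroup.centralizer {g} := by
    rw [Subgroup.closure_le]
    rintro _ (rfl | rfl) <;> rw [SetLike.mem_coe, Subgroup.mem_centralizer_singleton_iff]
    exacts [hx, hy]
  rw [Subgroup.mem_center_iff]
  intro w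
  rw [← Subgroup.mem_centralizer_singleton_iff]
  exact hle (h.closure_eq_top ▸ Subgroup.mem_top w)

theorem commute_braid (h : IsG5Pair_s14 x y) (g : G) : Commute (x * y * x * y) g := by
  have hx : Commute x (x * y * x * y) := by
    change x * (x * y * x * y) = x * y * x * y * x
    nth_rw 1 [h.braid]
    simp only [mul_assoc]
  have hy : Commute y (x * y * x * y) := by
    change y * (x * y * x * y) = x * y * x * y * y
    nth_rw 2 [h.braid]
    simp only [mul_assoc]
  exact (Subgroup.mem_center_iff.mp (h.mem_center_of_commute hx hy) g).symm

theorem conj_right_eq (h : IsG5Pair_s14 x y) : y⁻¹ * x * y = x * y * x * y * (y * x⁻¹) :=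
  calc y⁻¹ * x * y = y * (y * x * y * x) * x⁻¹ := by rw [h.swap.inv_left]; group
    _ = y * (x * y * x * y) * x⁻¹ := by rw [h.braid]
    _ = x * y * x * y * (y * x⁻¹) := by rw [← (h.commute_braid y).eq, mul_assoc]

theorem conj_left_conj_eq (h : IsG5Pair_s14 x y) : x * (y * x * y⁻¹) * x⁻¹ = y⁻¹ * x * y := by
  rw [h.conj_right_eq, h.swap.inv_left]
  group

theorem inv_conj_eq_s14 (h : IsG5Pair_s14 x y) :
    x⁻¹ * (y * x * y⁻¹) * x = (x * y * x * y) ^ 2 * y⁻¹ :=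
  calc x⁻¹ * (y * x * y⁻¹) * x = x * (x * y * x * y) * y * x := by
        rw [h.inv_left, h.swap.inv_left]; group
    _ = (x * y * x * y) ^ 2 * y⁻¹ := by rw [← (h.commute_braid x).eq, pow_two]; group

theorem conj_left_inv_conj_eq (h : IsG5Pair_s14 x y) :
    x * (y⁻¹ * x * y) * x⁻¹ = x⁻¹ * (y * x * y⁻¹) * x :=
  calc x * (y⁻¹ * x * y) * x⁻¹ = x * (x * (y * x * y⁻¹) * x⁻¹) * x⁻¹ := by
        rw [h.conj_left_conj_eq]
    _ = x * x * (y * x * y⁻¹) * (x * x)⁻¹ := by group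
    _ = x⁻¹ * (y * x * y⁻¹) * x := by rw [← h.inv_left, inv_inv]

theorem conj_left_mem_tetrahedron (h : IsG5Pair_s14 x y) {t : G} (ht : t ∈ tetrahedron x y) :
    x * t * x⁻¹ ∈ tetrahedron x y := by
  rcases ht with rfl | rfl | rfl | rfl
  · exact .inl (mul_inv_cancel_right _ _)
  · exact .inr (.inr (.inr h.conj_left_inv_conj_eq))
  · exact .inr (.inl h.conj_left_conj_eq)
  · exact .inr (.inr (.inl (by group)))

theorem conj_right_mem_tetrahedron (h : IsG5Pair_s14 x y) {t : G} (ht : t ∈ tetrahedron x y) :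
    y * t * y⁻¹ ∈ tetrahedron x y := by
  rcases ht with rfl | rfl | rfl | rfl
  · exact .inr (.inr (.inl rfl))
  · exact .inl (by group)
  · have hconj : y * (y * x * y⁻¹) * y⁻¹ = y * y * x * (y * y)⁻¹ := by group
    exact .inr (.inl (by rw [hconj, ← h.swap.inv_left, inv_inv]))
  · have hfix : Commute y (x⁻¹ * (y * x * y⁻¹) * x) := by
      rw [h.inv_conj_eq_s14]
      exact ((h.commute_braid y).symm.pow_right 2).mul_right (Commute.refl y).inv_right
    exact .inr (.inr (.inr (mul_inv_eq_iff_eq_mul.mpr hfix.eq)))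

theorem conj_mem_tetrahedron (h : IsG5Pair_s14 x y) (g : G) {t : G} (ht : t ∈ tetrahedron x y) :
    g * t * g⁻¹ ∈ tetrahedron x y := by
  have hmul {g₁ g₂ : G} (h₁ : ∀ t ∈ tetrahedron x y, g₁ * t * g₁⁻¹ ∈ tetrahedron x y)
      (h₂ : ∀ t ∈ tetrahedron x y, g₂ * t * g₂⁻¹ ∈ tetrahedron x y) :
      ∀ t ∈ tetrahedron x y, g₁ * g₂ * t * (g₁ * g₂)⁻¹ ∈ tetrahedron x y := fun t ht => by
    simpa [mul_assoc] using h₁ _ (h₂ t ht)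
  have hx : ∀ t ∈ tetrahedron x y, x * t * x⁻¹ ∈ tetrahedron x y :=
    fun _ => h.conj_left_mem_tetrahedron
  have hy : ∀ t ∈ tetrahedron x y, y * t * y⁻¹ ∈ tetrahedron x y :=
    fun _ => h.conj_right_mem_tetrahedron
  have hg : g ∈ Subgroup.closure {x, y} := h.closure_eq_top ▸ Subgroup.mem_top g
  induction hg using Subgroup.closure_induction_left generalizing t with
  | one => simpa using ht
  | mul_left w hw g _ ih =>
    rcases hw with rfl | rfl
    exacts [hmul hx (fun _ => ih) t ht, hmul hy (fun _ => ih) t ht]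
  | inv_mul_cancel w hw g _ ih =>
    rcases hw with rfl | rfl
    · rw [h.inv_left]; exact hmul (hmul hx hx) (fun _ => ih) t ht
    · rw [h.swap.inv_left]; exact hmul (hmul hy hy) (fun _ => ih) t ht

theorem mem_tetrahedron_of_isConj (h : IsG5Pair_s14 x y) {t : G} (ht : IsConj x t) :
    t ∈ tetrahedron x y := by
  obtain ⟨g, rfl⟩ := isConj_iff.mp ht
  exact h.conj_mem_tetrahedron g (.inl rfl)

theorem braid_conj_right (h : IsG5Pair_s14 x y) :
    x * (y * x * y⁻¹) * x = y * x * y⁻¹ * x * (y * x * y⁻¹) :=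
  calc x * (y * x * y⁻¹) * x = x * y * x * y * (y * x) := by rw [h.swap.inv_left]; group
    _ = y * x * (x * y * x * y * y⁻¹) * y := by rw [(h.commute_braid (y * x)).eq]; group
    _ = y * x * (y⁻¹ * (x * y * x * y)) * y := by rw [(h.commute_braid y⁻¹).eq]
    _ = y * x * y⁻¹ * x * (y * x * y⁻¹) := by rw [h.swap.inv_left]; group

theorem braid_of_mem_tetrahedron (h : IsG5Pair_s14 x y) {t : G} (ht : t ∈ tetrahedron x y) :
    x * t * x = t * x * t := by
  rcases ht with rfl | rfl | rfl | rfl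
  · rfl
  · rw [← h.conj_left_conj_eq]
    simpa [mul_assoc] using congrArg (MulAut.conj x) h.braid_conj_right
  · exact h.braid_conj_right
  · simpa [mul_assoc] using congrArg (MulAut.conj x⁻¹) h.braid_conj_right

theorem isSmallBraidClass (h : IsG5Pair_s14 x y) : IsSmallBraidClass {t | IsConj x t} where
  conj_mem g t ht := IsConj.trans ht (isConj_iff.mpr ⟨g⁻¹, by rw [inv_inv]⟩)
  braid s hs t ht := by
    obtain ⟨g, rfl⟩ := isConj_iff.mp hs
    have hconj : IsConj x (g⁻¹ * t * g) := IsConj.trans ht (isConj_iff.mpr ⟨g⁻¹, by rw [inv_inv]⟩)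
    have hbraid := h.braid_of_mem_tetrahedron (h.mem_tetrahedron_of_isConj hconj)
    simpa [mul_assoc] using congrArg (MulAut.conj g) hbraid
  encard_le :=
    (Set.encard_le_encard fun _ => h.mem_tetrahedron_of_isConj).trans (encard_tetrahedron_le x y)

theorem centralizer_le_center (h : IsG5Pair_s14 x y) :
    Subgroup.centralizer {t | IsConj x t} ≤ Subgroup.center G := by
  intro g hg
  rw [Subgroup.mem_centralizer_iff] at hg
  have hx : Commute x g := hg x (IsConj.refl x)
  have hfourth : Commute ((x * y * x * y) ^ 2 * y⁻¹) g := by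
    rw [← h.inv_conj_eq_s14]
    exact hg _ (isConj_iff.mpr ⟨x⁻¹ * y, by group⟩)
  have hy : Commute y⁻¹ g := by
    simpa using ((h.commute_braid g).pow_left 2).inv_left.mul_left hfourth
  exact h.mem_center_of_commute hx (by simpa using hy.inv_left)

theorem center_eq_top_of_isConj (h : IsG5Pair_s14 x y) {r : G} (hxr : IsConj x r)
    (hr : r ∈ Subgroup.center G) : Subgroup.center G = ⊤ := by
  have hclass : {t | IsConj x t} ⊆ Subgroup.center G := by
    intro t hxt
    obtain ⟨g, rfl⟩ := isConj_iff.mp (hxr.symm.trans hxt)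
    exact Subgroup.Normal.conj_mem inferInstance r hr g
  rw [← top_le_iff, ← Subgroup.centralizer_eq_top_iff_subset.mpr hclass]
  exact h.centralizer_le_center

end IsG5Pair_s14

end G5Pair

section G5

theorem isG5Pair_ga_gb_s14 : IsG5Pair_s14 ga gb where
  pow_left := PresentedGroup.one_of_mem (by simp [g5Rels])
  pow_right := PresentedGroup.one_of_mem (by simp [g5Rels])
  braid := PresentedGroup.mk_eq_mk_of_mul_inv_mem (by simp [g5Rels])
  closure_eq_top := by
    rw [← PresentedGroup.closure_range_of g5Rels]
    congr 1
    ext g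
    simp [ga, gb, eq_comm]

theorem ga_gb_not_commute : ¬ Commute ga gb := by
  let rotation : Fin 2 → Equiv.Perm (Fin 4) := ![c[0, 1, 2], c[0, 1, 3]]
  have hrel : ∀ r ∈ g5Rels, FreeGroup.lift rotation r = 1 := by
    rintro _ (rfl | rfl | rfl) <;>
      simp only [map_pow, map_mul, map_inv, FreeGroup.lift_apply_of] <;> decide
  intro h
  have hrot := h.map (PresentedGroup.toGroup hrel)
  simp only [ga, gb, PresentedGroup.toGroup.of] at hrot
  exact absurd hrot.eq (by decide)

theorem exists_isG5Pair_of_class {R : Set G5} (hR : R = S1 ∨ R = S2 ∨ R = S3 ∨ R = S4) :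
    ∃ x y : G5, IsG5Pair_s14 x y ∧ R = {t | IsConj x t} := by
  have hab := isG5Pair_ga_gb_s14
  rcases hR with rfl | rfl | rfl | rfl
  · exact ⟨ga, gb, hab, rfl⟩
  · exact ⟨gb, ga, hab.swap, rfl⟩
  · exact ⟨ga⁻¹, gb⁻¹, hab.inv, by rw [S3, pow_two, hab.inv_left]⟩
  · exact ⟨gb⁻¹, ga⁻¹, hab.swap.inv, by rw [S4, pow_two, hab.swap.inv_left]⟩

theorem IsReflection5.notMem_center {r : G5} (hr : IsReflection5 r) :
    r ∉ Subgroup.center G5 := by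
  intro hcenter
  obtain ⟨R, hR, hrR⟩ : ∃ R : Set G5, (R = S1 ∨ R = S2 ∨ R = S3 ∨ R = S4) ∧ r ∈ R := by
    simpa [or_and_right, exists_or, IsReflection5] using hr
  obtain ⟨x, y, hxy, rfl⟩ := exists_isG5Pair_of_class hR
  have hga : ga ∈ Subgroup.center G5 :=
    hxy.center_eq_top_of_isConj hrR hcenter ▸ Subgroup.mem_top ga
  exact ga_gb_not_commute (Subgroup.mem_center_iff.mp hga gb).symm

end G5

theorem g5_three_plus_two_pair_general (R : Set G5)
    (hR : R = S1 ∨ R = S2 ∨ R = S3 ∨ R = S4)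
    (k : ℕ) (t : Fin k → G5) (h3 : 3 ≤ {i : Fin k | t i ∈ R}.ncard)
    (h4 : 4 ≤ {i : Fin k | t i ∉ Subgroup.center G5}.ncard) :
    ∃ s : Fin k → G5, SameHurwitzOrbit t s ∧
      ∃ i : ℕ, ∃ h : i + 1 < k,
        s ⟨i, Nat.lt_of_succ_lt h⟩ = s ⟨i + 1, h⟩ ∧ s ⟨i + 1, h⟩ ∈ R := by
  obtain ⟨x, y, hxy, rfl⟩ := exists_isG5Pair_of_class hR
  refine hxy.isSmallBraidClass.exists_sameHurwitzOrbit_pair t h3 (h4.trans ?_)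
  exact Set.ncard_le_ncard fun i hi hcentralizer => hi (hxy.centralizer_le_center hcentralizer)

theorem g5_three_plus_two_pair (R : Set G5)
    (hR : R = S1 ∨ R = S2 ∨ R = S3 ∨ R = S4)
    (k : ℕ) (hk : 5 ≤ k) (t : Fin k → G5) (ht : ∀ i, IsReflection5 (t i))
    (h3 : 3 ≤ {i : Fin k | t i ∈ R}.ncard) :
    ∃ s : Fin k → G5, SameHurwitzOrbit t s ∧
      ∃ i : ℕ, ∃ h : i + 1 < k,
        s ⟨i, Nat.lt_of_succ_lt h⟩ = s ⟨i + 1, h⟩ ∧ s ⟨i + 1, h⟩ ∈ R := by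
  refine g5_three_plus_two_pair_general R hR k t h3 ?_
  simpa [fun i => (ht i).notMem_center] using le_of_lt hk
end
end

section
/- Every tuple of reflections of G5 that contains at least two entries from a conjugacy class R_i, at least one entry from the non-adjacent class of R_i, and at least one additional entry has, in its Hurwitz orbit, a tuple with two consecutive equal entries both lying in R_i. -/
noncomputable section

open Matrix Complex

/-! The quotient of `G₅` by its centre is `A₄`. Under `G₅ → A₄` each class of reflections maps
bijectively onto a class of four 3-cycles, and `Rᵢ` has the same image as its non-adjacent class.
If `P ≠ Q` lie in such a class of `A₄`, then `PQP = QPQ` and the class is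
`{P, Q, Q⁻¹PQ, QPQ⁻¹}`.

Hurwitz moves permute the conjugacy classes of the entries freely, so one may assume that the tuple
starts with `p, q ∈ Rᵢ`, then `u` in the non-adjacent class, then a non-central `v`. Let `P, Q, U`
be the images of `p, q, u`. Full twists of neighbouring strands make the images of `p` and `q` equal
unless `U = QPQ⁻¹`. In that case a full twist of `u` around `v` replaces `U` by another 3-cycle,
provided `U` does not commute with the image of `v`; if it does, first twist `q` around `u`, which
replaces `U` by `Q`. -/

infixr:67 "∷" => vecCons

/-! ### Hurwitz moves -/

section Hurwitz

variable {G : Type*} [Group G] {k : ℕ}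

theorem isConj_inv_mul_mul (g x : G) : IsConj x (g⁻¹ * x * g) :=
  isConj_iff.mpr ⟨g⁻¹, by rw [inv_inv]⟩

theorem isConj_mul_mul_inv (g x : G) : IsConj x (g * x * g⁻¹) :=
  isConj_iff.mpr ⟨g, rfl⟩

namespace IsHurwitzMove

theorem vecCons {t s : Fin k → G} (h : IsHurwitzMove t s) (x : G) :
    IsHurwitzMove (x ∷ t) (x ∷ s) := by
  obtain ⟨i, hi, h₀, h₁, h_other⟩ := h
  refine ⟨i + 1, Nat.succ_lt_succ hi, h₀, h₁, Fin.cases (fun _ _ ↦ rfl) fun j hj₀ hj₁ ↦ ?_⟩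
  exact h_other j (fun h ↦ hj₀ (by simp [h])) (fun h ↦ hj₁ (by simp [h]))

theorem vecCons_vecCons (x y : G) (t : Fin k → G) :
    IsHurwitzMove (x ∷ y ∷ t) (y ∷ (y⁻¹ * x * y) ∷ t) := by
  refine ⟨0, by omega, rfl, rfl, Fin.cases (fun h ↦ absurd rfl h) ?_⟩
  exact Fin.cases (fun _ h ↦ absurd rfl h) fun _ _ _ ↦ rfl

end IsHurwitzMove

theorem exists_isHurwitzMove_isConj_swap {n : ℕ} (t : Fin (n + 1) → G) (i : Fin n) :
    ∃ s, IsHurwitzMove t s ∧ ∀ j, IsConj (t (Equiv.swap i.castSucc i.succ j)) (s j) := by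
  refine ⟨Function.update (Function.update t i.castSucc (t i.succ)) i.succ
    ((t i.succ)⁻¹ * t i.castSucc * t i.succ), ⟨i, Nat.succ_lt_succ i.isLt, ?_, ?_, ?_⟩, ?_⟩
  · exact (Function.update_of_ne i.castSucc_lt_succ.ne _ _).trans (Function.update_self ..)
  · exact Function.update_self ..
  · intro j hj₀ hj₁
    rw [Function.update_of_ne (fun h ↦ hj₁ (by simp [h])),
      Function.update_of_ne (fun h ↦ hj₀ (by simp [h]))]
  · intro j
    rcases eq_or_ne j i.succ with rfl | hj₁
    · rw [Equiv.swap_apply_right, Function.update_self]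
      exact isConj_inv_mul_mul ..
    rw [Function.update_of_ne hj₁]
    rcases eq_or_ne j i.castSucc with rfl | hj₀
    · rw [Equiv.swap_apply_left, Function.update_self]
    · rw [Equiv.swap_apply_of_ne_of_ne hj₀ hj₁, Function.update_of_ne hj₀]

namespace SameHurwitzOrbit

theorem refl (t : Fin k → G) : SameHurwitzOrbit t t :=
  Relation.EqvGen.refl t

theorem symm {t s : Fin k → G} (h : SameHurwitzOrbit t s) : SameHurwitzOrbit s t :=
  Relation.EqvGen.symm _ _ h

theorem trans {t s r : Fin k → G} (h : SameHurwitzOrbit t s) (h' : SameHurwitzOrbit s r) :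
    SameHurwitzOrbit t r :=
  Relation.EqvGen.trans _ _ _ h h'

theorem vecCons {t s : Fin k → G} (h : SameHurwitzOrbit t s) (x : G) :
    SameHurwitzOrbit (x ∷ t) (x ∷ s) := by
  induction h with
  | rel _ _ h => exact .rel _ _ (h.vecCons x)
  | refl _ => exact refl _
  | symm _ _ _ ih => exact ih.symm
  | trans _ _ _ _ _ ih ih' => exact ih.trans ih'

theorem full_twist (x y : G) (t : Fin k → G) :
    SameHurwitzOrbit (x ∷ y ∷ t) ((y⁻¹ * x * y) ∷ ((x * y)⁻¹ * y * (x * y)) ∷ t) := by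
  have h := (Relation.EqvGen.rel _ _ (IsHurwitzMove.vecCons_vecCons x y t)).trans _ _ _
    (.rel _ _ (IsHurwitzMove.vecCons_vecCons y (y⁻¹ * x * y) t))
  rwa [show (y⁻¹ * x * y)⁻¹ * y * (y⁻¹ * x * y) = (x * y)⁻¹ * y * (x * y) by group] at h

theorem full_twist_symm (x y : G) (t : Fin k → G) :
    SameHurwitzOrbit (x ∷ y ∷ t) ((x * y * x * (x * y)⁻¹) ∷ (x * y * x⁻¹) ∷ t) := by
  have h := full_twist (x * y * x * (x * y)⁻¹) (x * y * x⁻¹) t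
  rw [show (x * y * x⁻¹)⁻¹ * (x * y * x * (x * y)⁻¹) * (x * y * x⁻¹) = x by group,
    show (x * y * x * (x * y)⁻¹ * (x * y * x⁻¹))⁻¹ * (x * y * x⁻¹) *
      (x * y * x * (x * y)⁻¹ * (x * y * x⁻¹)) = y by group] at h
  exact h.symm

end SameHurwitzOrbit

theorem exists_sameHurwitzOrbit_isConj_perm {n : ℕ} (σ : Equiv.Perm (Fin (n + 1)))
    (t : Fin (n + 1) → G) :
    ∃ s, SameHurwitzOrbit t s ∧ ∀ i, IsConj (t (σ i)) (s i) := by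
  have hσ : σ ∈ Submonoid.closure (Set.range fun i : Fin n ↦ Equiv.swap i.castSucc i.succ) := by
    rw [Equiv.Perm.mclosure_swap_castSucc_succ]
    exact Submonoid.mem_top σ
  induction hσ using Submonoid.closure_induction generalizing t with
  | mem σ h =>
    obtain ⟨i, rfl⟩ := h
    obtain ⟨s, hts, hs⟩ := exists_isHurwitzMove_isConj_swap t i
    exact ⟨s, .rel _ _ hts, hs⟩
  | one => exact ⟨t, .refl t, fun i ↦ .refl _⟩
  | mul σ τ _ _ hσ hτ =>
    obtain ⟨s, hts, hs⟩ := hσ t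
    obtain ⟨r, hsr, hr⟩ := hτ s
    exact ⟨r, hts.trans hsr, fun i ↦ (hs (τ i)).trans (hr i)⟩

/-- Some tuple in the Hurwitz orbit of `t` has two consecutive equal entries lying in `C`. -/
def HurwitzOrbitHasPair (C : Set G) (t : Fin k → G) : Prop :=
  ∃ s : Fin k → G, SameHurwitzOrbit t s ∧
    ∃ i : ℕ, ∃ h : i + 1 < k,
      s ⟨i, Nat.lt_of_succ_lt h⟩ = s ⟨i + 1, h⟩ ∧ s ⟨i + 1, h⟩ ∈ C

namespace HurwitzOrbitHasPair

variable {C : Set G}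

theorem of_sameHurwitzOrbit {t s : Fin k → G} (hs : HurwitzOrbitHasPair C s)
    (hts : SameHurwitzOrbit t s) : HurwitzOrbitHasPair C t := by
  obtain ⟨r, hsr, hr⟩ := hs
  exact ⟨r, hts.trans hsr, hr⟩

theorem vecCons_self {x : G} (hx : x ∈ C) (t : Fin k → G) :
    HurwitzOrbitHasPair C (x ∷ x ∷ t) :=
  ⟨x ∷ x ∷ t, .refl _, 0, Nat.le_add_left 2 k, rfl, hx⟩

end HurwitzOrbitHasPair

end Hurwitz

/-! ### The braid relation and its quartic analogue -/

section BraidRelations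

variable {G : Type*} [Group G] {x y : G}

theorem conj_mul_eq_right_of_braid (h : x * y * x = y * x * y) : x * y * x * (x * y)⁻¹ = y := by
  rw [h]
  group

theorem conj_mul_inv_eq_left_of_braid (h : x * y * x = y * x * y) :
    (x * y)⁻¹ * y * (x * y) = x := by
  rw [mul_assoc, ← mul_assoc y, ← h]
  group

theorem conj_conj_eq_of_braid (h : x * y * x = y * x * y) :
    (y⁻¹ * x * y)⁻¹ * y * (y⁻¹ * x * y) = x := by
  calc (y⁻¹ * x * y)⁻¹ * y * (y⁻¹ * x * y) = (x * y)⁻¹ * y * (x * y) := by group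
    _ = x := conj_mul_inv_eq_left_of_braid h

theorem inv_eq_mul_self_of_pow_three_eq_one (h : x ^ 3 = 1) : x⁻¹ = x * x :=
  inv_eq_of_mul_eq_one_right (by rw [← h, pow_three])

theorem inv_mul_inv_of_pow_three_eq_one (h : x ^ 3 = 1) : x⁻¹ * x⁻¹ = x := by
  rw [← _root_.mul_inv_rev, ← inv_eq_mul_self_of_pow_three_eq_one h, inv_inv]

theorem conj_conj_of_pow_three_eq_one (h : x ^ 3 = 1) (g : G) :
    x * (x * g * x⁻¹) * x⁻¹ = x⁻¹ * g * x := by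
  calc x * (x * g * x⁻¹) * x⁻¹ = x * x * g * (x⁻¹ * x⁻¹) := by simp only [mul_assoc]
    _ = x⁻¹ * g * x := by
      rw [inv_mul_inv_of_pow_three_eq_one h, ← inv_eq_mul_self_of_pow_three_eq_one h]

theorem commute_mul_mul_mul_left (h : x * y * x * y = y * x * y * x) :
    Commute (x * y * x * y) x := by
  calc x * y * x * y * x = x * (y * x * y * x) := by group
    _ = x * (x * y * x * y) := by rw [h]

theorem commute_mul_mul_mul_right (h : x * y * x * y = y * x * y * x) :
    Commute (x * y * x * y) y := by
  calc x * y * x * y * y = y * x * y * x * y := by rw [h]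
    _ = y * (x * y * x * y) := by group

theorem conj_left_conj_eq (h : x * y * x * y = y * x * y * x) :
    x * (y * x * y⁻¹) * x⁻¹ = y⁻¹ * x * y := by
  calc x * (y * x * y⁻¹) * x⁻¹ = x * y * x * y * (y⁻¹ * y⁻¹ * x⁻¹) := by group
    _ = (x * y * x * y) * y⁻¹ * (y⁻¹ * x⁻¹) := by group
    _ = y⁻¹ * (x * y * x * y) * (y⁻¹ * x⁻¹) := by
      rw [(commute_mul_mul_mul_right h).inv_right.eq]
    _ = y⁻¹ * x * y := by group

theorem inv_conj_eq_mul_mul_inv (hy : y ^ 3 = 1) (h : x * y * x * y = y * x * y * x) :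
    y⁻¹ * x * y = x * y * x * y * (y * x⁻¹) := by
  calc y⁻¹ * x * y = y⁻¹ * (x * y * x * y) * (y⁻¹ * x⁻¹) := by group
    _ = x * y * x * y * (y⁻¹ * y⁻¹ * x⁻¹) := by
      rw [← (commute_mul_mul_mul_right h).inv_right.eq]
      group
    _ = x * y * x * y * (y * x⁻¹) := by rw [inv_mul_inv_of_pow_three_eq_one hy]

theorem conj_left_inv_conj_eq (hx : x ^ 3 = 1) (hy : y ^ 3 = 1)
    (h : x * y * x * y = y * x * y * x) :
    x * (y⁻¹ * x * y) * x⁻¹ = (x * y * x * y) ^ 2 * y⁻¹ := by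
  calc x * (y⁻¹ * x * y) * x⁻¹ = x * (x * y * x * y) * y * (x⁻¹ * x⁻¹) := by
        rw [inv_conj_eq_mul_mul_inv hy h]
        group
    _ = x * y * x * y * x * y * x := by
      rw [inv_mul_inv_of_pow_three_eq_one hx, ← (commute_mul_mul_mul_left h).eq]
    _ = (x * y * x * y) ^ 2 * y⁻¹ := by
      rw [pow_two]
      group

end BraidRelations

/-! ### Three-cycles in `A₄` -/

namespace A4

variable {P Q U V : alternatingGroup (Fin 4)}

theorem braid_of_isConj (hP : P ^ 3 = 1) (hPQ : IsConj P Q) (hne : P ≠ Q) :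
    P * Q * P = Q * P * Q := by
  have key : ∀ P g : alternatingGroup (Fin 4), P ^ 3 = 1 → P ≠ g * P * g⁻¹ →
      P * (g * P * g⁻¹) * P = (g * P * g⁻¹) * P * (g * P * g⁻¹) := by
    decide +kernel
  obtain ⟨g, rfl⟩ := isConj_iff.mp hPQ
  exact key P g hP hne

theorem eq_or_eq_or_eq_or_eq_of_isConj (hP : P ^ 3 = 1) (hPQ : IsConj P Q) (hne : P ≠ Q)
    (hPU : IsConj P U) : U = P ∨ U = Q ∨ U = Q⁻¹ * P * Q ∨ U = Q * P * Q⁻¹ := by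
  have key : ∀ P g h : alternatingGroup (Fin 4), P ^ 3 = 1 → P ≠ g * P * g⁻¹ →
      h * P * h⁻¹ = P ∨ h * P * h⁻¹ = g * P * g⁻¹ ∨
      h * P * h⁻¹ = (g * P * g⁻¹)⁻¹ * P * (g * P * g⁻¹) ∨
      h * P * h⁻¹ = g * P * g⁻¹ * P * (g * P * g⁻¹)⁻¹ := by
    decide +kernel
  obtain ⟨g, rfl⟩ := isConj_iff.mp hPQ
  obtain ⟨h, rfl⟩ := isConj_iff.mp hPU
  exact key P g h hP hne

theorem mem_powers_of_commute (hP : P ^ 3 = 1) (hP₁ : P ≠ 1) (h : Commute V P) :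
    V = 1 ∨ V = P ∨ V = P ^ 2 := by
  have key : ∀ P V : alternatingGroup (Fin 4), P ^ 3 = 1 → P ≠ 1 → V * P = P * V →
      V = 1 ∨ V = P ∨ V = P ^ 2 := by
    decide +kernel
  exact key P V hP hP₁ h

theorem eq_of_isConj_of_commute (hP : P ^ 3 = 1) (hPQ : IsConj P Q) (h : Commute P Q) : P = Q := by
  by_contra hne
  have hbraid := braid_of_isConj hP hPQ hne
  rw [h.eq, mul_assoc, mul_assoc, h.eq] at hbraid
  exact hne (by simpa using hbraid)

theorem eq_of_isConj_of_commute_of_commute (hP : P ^ 3 = 1) (hPQ : IsConj P Q) (hV : V ≠ 1)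
    (hVP : Commute V P) (hVQ : Commute V Q) : P = Q := by
  rcases eq_or_ne P 1 with rfl | hP₁
  · exact (isConj_one_right.mp hPQ).symm
  rcases mem_powers_of_commute hP hP₁ hVP with rfl | rfl | rfl
  · exact absurd rfl hV
  · exact eq_of_isConj_of_commute hP hPQ hVQ
  · have hPP : (P ^ 2) ^ 2 = P := by rw [← pow_mul, pow_succ, hP, one_mul]
    exact eq_of_isConj_of_commute hP hPQ (hPP ▸ hVQ.pow_left 2)

end A4

/-! ### The quotient map `G₅ → A₄` -/

namespace G5

theorem ga_pow_three : ga ^ 3 = 1 :=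
  PresentedGroup.one_of_mem (rels := g5Rels) (.inl rfl)

theorem gb_pow_three : gb ^ 3 = 1 :=
  PresentedGroup.one_of_mem (rels := g5Rels) (.inr (.inl rfl))

theorem ga_mul_gb_mul_ga_mul_gb : ga * gb * ga * gb = gb * ga * gb * ga :=
  PresentedGroup.mk_eq_mk_of_mul_inv_mem (rels := g5Rels) (.inr (.inr rfl))

theorem generated_by_ga_gb {H : Subgroup G5} (ha : ga ∈ H) (hb : gb ∈ H) (g : G5) : g ∈ H :=
  PresentedGroup.generated_by g5Rels H (Fin.forall_fin_two.mpr ⟨ha, hb⟩) g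

theorem mem_center_of_commute {g : G5} (ha : Commute g ga) (hb : Commute g gb) :
    g ∈ Subgroup.center G5 :=
  Subgroup.mem_center_iff.mpr fun h ↦ Subgroup.mem_centralizer_singleton_iff.mp <|
    generated_by_ga_gb (H := Subgroup.centralizer {g})
      (Subgroup.mem_centralizer_singleton_iff.mpr ha.symm.eq)
      (Subgroup.mem_centralizer_singleton_iff.mpr hb.symm.eq) h

theorem ga_mul_gb_mul_ga_mul_gb_mem_center : ga * gb * ga * gb ∈ Subgroup.center G5 :=
  mem_center_of_commute (commute_mul_mul_mul_left ga_mul_gb_mul_ga_mul_gb)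
    (commute_mul_mul_mul_right ga_mul_gb_mul_ga_mul_gb)

/-- The homomorphism out of `G₅` determined by the images of `a` and `b`. -/
def lift {H : Type*} [Group H] (x y : H) (hx : x ^ 3 = 1) (hy : y ^ 3 = 1)
    (h : x * y * x * y = y * x * y * x) : G5 →* H :=
  PresentedGroup.toGroup (f := ![x, y]) (by
    rintro _ (rfl | rfl | rfl)
    · simpa using hx
    · simpa using hy
    · rw [map_mul, map_inv, mul_inv_eq_one]
      simpa using h)

section Lift

variable {H : Type*} [Group H] {x y : H} (hx : x ^ 3 = 1) (hy : y ^ 3 = 1)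
  (h : x * y * x * y = y * x * y * x)

@[simp]
theorem lift_ga : lift x y hx hy h ga = x :=
  PresentedGroup.toGroup.of _

@[simp]
theorem lift_gb : lift x y hx hy h gb = y :=
  PresentedGroup.toGroup.of _

end Lift

/-- The image of `a` in `A₄`. -/
def rotA : alternatingGroup (Fin 4) := ⟨c[1, 2, 3], Equiv.Perm.mem_alternatingGroup.mpr (by decide)⟩

/-- The image of `b` in `A₄`. -/
def rotB : alternatingGroup (Fin 4) := ⟨c[0, 1, 2], Equiv.Perm.mem_alternatingGroup.mpr (by decide)⟩

/-- The quotient map from `G₅` onto `A₄`, the group of rotations of a tetrahedron. -/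
def toA4 : G5 →* alternatingGroup (Fin 4) :=
  lift rotA rotB (by decide) (by decide) (by decide)

theorem toA4_ga : toA4 ga = rotA := lift_ga ..

theorem toA4_gb : toA4 gb = rotB := lift_gb ..

/-- The four conjugates of `a`, labelled by the vertices of the tetrahedron on which `G₅` acts
through `toA4`; the last one is `(abab)² b⁻¹ = a b⁻¹ a b a⁻¹`. -/
def conjA : Fin 4 → G5 :=
  ![ga, gb * ga * gb⁻¹, gb⁻¹ * ga * gb, (ga * gb * ga * gb) ^ 2 * gb⁻¹]

theorem ga_mul_conjA_mul_inv (i : Fin 4) : ga * conjA i * ga⁻¹ = conjA (rotA.1 i) := by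
  have h₁ := conj_left_conj_eq ga_mul_gb_mul_ga_mul_gb
  have h₂ := conj_left_inv_conj_eq ga_pow_three gb_pow_three ga_mul_gb_mul_ga_mul_gb
  fin_cases i
  · exact mul_inv_cancel_right ga ga
  · exact h₁
  · exact h₂
  · change ga * ((ga * gb * ga * gb) ^ 2 * gb⁻¹) * ga⁻¹ = gb * ga * gb⁻¹
    rw [← h₂, conj_conj_of_pow_three_eq_one ga_pow_three, ← h₁]
    group

theorem gb_mul_conjA_mul_inv (i : Fin 4) : gb * conjA i * gb⁻¹ = conjA (rotB.1 i) := by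
  fin_cases i
  · rfl
  · exact conj_conj_of_pow_three_eq_one gb_pow_three ga
  · change gb * (gb⁻¹ * ga * gb) * gb⁻¹ = ga
    group
  · change gb * ((ga * gb * ga * gb) ^ 2 * gb⁻¹) * gb⁻¹ = (ga * gb * ga * gb) ^ 2 * gb⁻¹
    rw [← mul_assoc, ← ((commute_mul_mul_mul_right ga_mul_gb_mul_ga_mul_gb).pow_left 2).eq]
    group

theorem mul_conjA_mul_inv (g : G5) (i : Fin 4) : g * conjA i * g⁻¹ = conjA ((toA4 g).1 i) := by
  have hg : g ∈ Subgroup.closure {ga, gb} :=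
    generated_by_ga_gb (Subgroup.subset_closure (.inl rfl)) (Subgroup.subset_closure (.inr rfl)) g
  induction hg using Subgroup.closure_induction generalizing i with
  | mem g hg =>
    rcases hg with rfl | rfl
    · rw [toA4_ga, ga_mul_conjA_mul_inv]
    · rw [toA4_gb, gb_mul_conjA_mul_inv]
  | one => simp
  | mul g h _ _ hg hh =>
    calc g * h * conjA i * (g * h)⁻¹ = g * (h * conjA i * h⁻¹) * g⁻¹ := by group
      _ = conjA ((toA4 (g * h)).1 i) := by
        rw [hh, hg, map_mul]
        rfl
  | inv g _ hg =>
    have h : g * conjA ((toA4 g⁻¹).1 i) * g⁻¹ = conjA i := by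
      rw [hg, map_inv]
      exact congrArg conjA ((toA4 g).1.apply_symm_apply i)
    rw [← h]
    group

theorem ker_toA4_le_center : toA4.ker ≤ Subgroup.center G5 := by
  intro g hg
  have hconj (i : Fin 4) : Commute g (conjA i) := by
    have h := mul_conjA_mul_inv g i
    rw [MonoidHom.mem_ker.mp hg] at h
    exact mul_inv_eq_iff_eq_mul.mp h
  have hga : Commute g ga := hconj 0
  have hz : Commute g ((ga * gb * ga * gb) ^ 2) :=
    Subgroup.mem_center_iff.mp (pow_mem ga_mul_gb_mul_ga_mul_gb_mem_center 2) g
  have hgb : Commute g gb := by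
    simpa [conjA] using (hconj 3).inv_right.mul_right hz
  exact mem_center_of_commute hga hgb

theorem eq_of_isConj_of_toA4_eq {x y : G5} (hx : toA4 x ^ 3 = 1) (hxy : IsConj x y)
    (h : toA4 x = toA4 y) : x = y := by
  obtain ⟨g, rfl⟩ := isConj_iff.mp hxy
  suffices hgx : Commute g x by rw [hgx.eq, mul_inv_cancel_right]
  have commute_of_toA4_eq_pow (n : ℕ) (hn : toA4 g = toA4 x ^ n) : Commute g x := by
    have hker : g * (x ^ n)⁻¹ ∈ toA4.ker := by simp [MonoidHom.mem_ker, hn]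
    have hcenter := Subgroup.mem_center_iff.mp (ker_toA4_le_center hker) x
    simpa using (show Commute x _ from hcenter).symm.mul_left ((Commute.refl x).pow_left n)
  by_cases hx₁ : toA4 x = 1
  · exact Subgroup.mem_center_iff.mp (ker_toA4_le_center hx₁) g
  have hcomm : Commute (toA4 g) (toA4 x) := by
    rw [map_mul, map_mul, map_inv] at h
    exact (eq_mul_inv_iff_mul_eq.mp h).symm
  rcases A4.mem_powers_of_commute hx hx₁ hcomm with hg | hg | hg
  · exact commute_of_toA4_eq_pow 0 (by rw [hg, pow_zero])
  · exact commute_of_toA4_eq_pow 1 (by rw [hg, pow_one])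
  · exact commute_of_toA4_eq_pow 2 hg

/-! ### Creating a pair by full twists -/

section Twists

variable {r p q u v : G5} {k : ℕ} {t : Fin k → G5} {i₁ i₂ j l : Fin k}

theorem toA4_pow_three_of_isConj (hr : toA4 r ^ 3 = 1) (hp : IsConj r p) : toA4 p ^ 3 = 1 :=
  isConj_one_right.mp (hr ▸ (toA4.map_isConj hp).pow 3)

theorem braid_toA4_of_isConj (hr : toA4 r ^ 3 = 1) (hp : IsConj (toA4 r) (toA4 p))
    (hq : IsConj (toA4 r) (toA4 q)) (hne : toA4 p ≠ toA4 q) :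
    toA4 p * toA4 q * toA4 p = toA4 q * toA4 p * toA4 q :=
  A4.braid_of_isConj (isConj_one_right.mp (hr ▸ hp.pow 3)) (hp.symm.trans hq) hne

theorem hasPair_of_toA4_eq (hr : toA4 r ^ 3 = 1) (hp : IsConj r p) (hq : IsConj r q)
    (h : toA4 p = toA4 q) : HurwitzOrbitHasPair (conjugatesOf r) (p ∷ q ∷ t) := by
  obtain rfl : p = q :=
    eq_of_isConj_of_toA4_eq (toA4_pow_three_of_isConj hr hp) (hp.symm.trans hq) h
  exact .vecCons_self (C := conjugatesOf r) hp t

theorem hasPair_of_toA4_eq_conj (hr : toA4 r ^ 3 = 1) (hp : IsConj r p) (hq : IsConj r q)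
    (h : toA4 p = (toA4 u)⁻¹ * toA4 q * toA4 u) :
    HurwitzOrbitHasPair (conjugatesOf r) (p ∷ q ∷ u ∷ t) := by
  refine .of_sameHurwitzOrbit ?_ ((SameHurwitzOrbit.full_twist q u t).vecCons p)
  exact hasPair_of_toA4_eq hr hp (hq.trans (isConj_inv_mul_mul u q)) (by simpa using h)

theorem hasPair_of_toA4_eq_left (hr : toA4 r ^ 3 = 1) (hp : IsConj r p) (hq : IsConj r q)
    (hne : toA4 p ≠ toA4 q) (h : toA4 u = toA4 p) :
    HurwitzOrbitHasPair (conjugatesOf r) (p ∷ q ∷ u ∷ t) := by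
  refine .of_sameHurwitzOrbit ?_ ((SameHurwitzOrbit.full_twist_symm q u t).vecCons p)
  have hbraid := braid_toA4_of_isConj hr (toA4.map_isConj hq) (toA4.map_isConj hp) hne.symm
  refine hasPair_of_toA4_eq hr hp (hq.trans (isConj_mul_mul_inv (q * u) q)) ?_
  simp only [map_mul, map_inv, h, conj_mul_eq_right_of_braid hbraid]

theorem hasPair_of_toA4_eq_right (hr : toA4 r ^ 3 = 1) (hp : IsConj r p) (hq : IsConj r q)
    (hne : toA4 p ≠ toA4 q) (h : toA4 u = toA4 q) :
    HurwitzOrbitHasPair (conjugatesOf r) (p ∷ q ∷ u ∷ t) := by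
  refine .of_sameHurwitzOrbit ?_ (SameHurwitzOrbit.full_twist p q (u ∷ t))
  have hbraid := braid_toA4_of_isConj hr (toA4.map_isConj hp) (toA4.map_isConj hq) hne
  refine hasPair_of_toA4_eq_conj hr (hp.trans (isConj_inv_mul_mul q p))
    (hq.trans (isConj_inv_mul_mul (p * q) q)) ?_
  simp only [map_mul, map_inv, h, conj_mul_inv_eq_left_of_braid hbraid]

theorem hasPair_of_toA4_ne_conj (hr : toA4 r ^ 3 = 1) (hp : IsConj r p) (hq : IsConj r q)
    (hu : IsConj (toA4 r) (toA4 u)) (h : toA4 u ≠ toA4 q * toA4 p * (toA4 q)⁻¹) :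
    HurwitzOrbitHasPair (conjugatesOf r) (p ∷ q ∷ u ∷ t) := by
  have hP := toA4.map_isConj hp
  have hQ := toA4.map_isConj hq
  by_cases hne : toA4 p = toA4 q
  · exact hasPair_of_toA4_eq hr hp hq hne
  rcases A4.eq_or_eq_or_eq_or_eq_of_isConj (toA4_pow_three_of_isConj hr hp) (hP.symm.trans hQ) hne
    (hP.symm.trans hu) with hU | hU | hU | hU
  · exact hasPair_of_toA4_eq_left hr hp hq hne hU
  · exact hasPair_of_toA4_eq_right hr hp hq hne hU
  · refine hasPair_of_toA4_eq_conj hr hp hq ?_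
    rw [hU, conj_conj_eq_of_braid (braid_toA4_of_isConj hr hP hQ hne)]
  · exact absurd hU h

theorem hasPair_of_not_commute (hr : toA4 r ^ 3 = 1) (hp : IsConj r p) (hq : IsConj r q)
    (hu : IsConj (toA4 r) (toA4 u)) (hv : ¬Commute (toA4 v) (toA4 u)) :
    HurwitzOrbitHasPair (conjugatesOf r) (p ∷ q ∷ u ∷ v ∷ t) := by
  by_cases hU : toA4 u = toA4 q * toA4 p * (toA4 q)⁻¹
  · refine .of_sameHurwitzOrbit ?_ (((SameHurwitzOrbit.full_twist u v t).vecCons q).vecCons p)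
    refine hasPair_of_toA4_ne_conj hr hp hq
      (hu.trans (toA4.map_isConj (isConj_inv_mul_mul v u))) fun h ↦ hv ?_
    rw [← hU, map_mul, map_mul, map_inv, mul_assoc, inv_mul_eq_iff_eq_mul] at h
    exact h.symm
  · exact hasPair_of_toA4_ne_conj hr hp hq hu hU

theorem hasPair_of_toA4_ne_one (hr : toA4 r ^ 3 = 1) (hp : IsConj r p) (hq : IsConj r q)
    (hu : IsConj (toA4 r) (toA4 u)) (hv : toA4 v ≠ 1) :
    HurwitzOrbitHasPair (conjugatesOf r) (p ∷ q ∷ u ∷ v ∷ t) := by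
  have hQ := toA4.map_isConj hq
  by_cases hpq : toA4 p = toA4 q
  · exact hasPair_of_toA4_eq hr hp hq hpq
  by_cases huq : toA4 q = toA4 u
  · exact hasPair_of_toA4_eq_right hr hp hq hpq huq.symm
  by_cases hvu : Commute (toA4 v) (toA4 u)
  · refine .of_sameHurwitzOrbit ?_ ((SameHurwitzOrbit.full_twist q u (v ∷ t)).vecCons p)
    have hU : toA4 ((q * u)⁻¹ * u * (q * u)) = toA4 q := by
      simp only [map_mul, map_inv,
        conj_mul_inv_eq_left_of_braid (braid_toA4_of_isConj hr hQ hu huq)]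
    refine hasPair_of_not_commute hr hp (hq.trans (isConj_inv_mul_mul u q)) (hU ▸ hQ) ?_
    rw [hU]
    exact fun hvq ↦ huq (A4.eq_of_isConj_of_commute_of_commute (toA4_pow_three_of_isConj hr hq)
      (hQ.symm.trans hu) hv hvq hvu)
  · exact hasPair_of_not_commute hr hp hq hu hvu

theorem hasPair_of_notMem_center
    (hinj : Function.Injective ![i₁, i₂, j, l]) (hr : toA4 r ^ 3 = 1)
    (hi₁ : IsConj r (t i₁)) (hi₂ : IsConj r (t i₂)) (hj : IsConj (toA4 r) (toA4 (t j)))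
    (hl : t l ∉ Subgroup.center G5) : HurwitzOrbitHasPair (conjugatesOf r) t := by
  obtain ⟨m, rfl⟩ : ∃ m, k = m + 4 :=
    Nat.exists_eq_add_of_le' (by simpa using Fintype.card_le_of_injective _ hinj)
  obtain ⟨σ, hσ⟩ := (Equiv.Perm.isMultiplyPretransitive (Fin (m + 4)) 4).exists_smul_eq
    (Fin.castLEEmb (Nat.le_add_left 4 m)) ⟨_, hinj⟩
  obtain ⟨s, hts, hs⟩ := exists_sameHurwitzOrbit_isConj_perm σ t
  have hσ₀ : σ 0 = i₁ := DFunLike.congr_fun hσ 0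
  have hσ₁ : σ 1 = i₂ := DFunLike.congr_fun hσ 1
  have hσ₂ : σ 2 = j := DFunLike.congr_fun hσ 2
  have hσ₃ : σ 3 = l := DFunLike.congr_fun hσ 3
  have hv : toA4 (s 3) ≠ 1 := fun h ↦ hl <| hσ₃ ▸ ker_toA4_le_center
    (isConj_one_left.mp (h ▸ toA4.map_isConj (hs 3)))
  refine .of_sameHurwitzOrbit ?_ hts
  have hcons : s = s 0 ∷ s 1 ∷ s 2 ∷ s 3 ∷ fun i ↦ s (i.addNat 4) := by
    ext i
    exact Fin.cases rfl (Fin.cases rfl (Fin.cases rfl (Fin.cases rfl fun _ ↦ rfl))) i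
  rw [hcons]
  exact hasPair_of_toA4_ne_one hr ((hσ₀ ▸ hi₁).trans (hs 0)) ((hσ₁ ▸ hi₂).trans (hs 1))
    ((hσ₂ ▸ hj).trans (toA4.map_isConj (hs 2))) hv

end Twists

/-! ### Non-adjacent classes -/

/-- The pairs consisting of a class of reflections and its non-adjacent class. -/
def NonAdjacent (Ri Rj : Set G5) : Prop :=
  (Ri = S1 ∧ Rj = S4) ∨ (Ri = S2 ∧ Rj = S3) ∨ (Ri = S3 ∧ Rj = S2) ∨ (Ri = S4 ∧ Rj = S1)

/-- The homomorphism from `G₅` to the integers modulo 3 sending both generators to `1`. It separates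
each class of reflections from its non-adjacent class. -/
def degree : G5 →* Multiplicative (ZMod 3) :=
  lift (.ofAdd 1) (.ofAdd 1) (by decide) (by decide) rfl

theorem not_isConj_of_degree_ne {x y : G5} (h : degree x ≠ degree y) : ¬IsConj x y :=
  fun hxy ↦ h (isConj_iff_eq.mp (degree.map_isConj hxy))

theorem not_isConj_ga_gb_sq : ¬IsConj ga (gb ^ 2) :=
  not_isConj_of_degree_ne (by rw [map_pow, degree, lift_ga, lift_gb]; decide)

theorem not_isConj_gb_ga_sq : ¬IsConj gb (ga ^ 2) :=
  not_isConj_of_degree_ne (by rw [map_pow, degree, lift_ga, lift_gb]; decide)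

theorem isConj_toA4_ga_toA4_gb_sq : IsConj (toA4 ga) (toA4 (gb ^ 2)) := by
  rw [map_pow, toA4_ga, toA4_gb]
  decide

theorem isConj_toA4_gb_toA4_ga_sq : IsConj (toA4 gb) (toA4 (ga ^ 2)) := by
  rw [map_pow, toA4_ga, toA4_gb]
  decide

theorem NonAdjacent.exists_eq_conjugatesOf {Ri Rj : Set G5} (h : NonAdjacent Ri Rj) :
    ∃ r r' : G5, Ri = conjugatesOf r ∧ Rj = conjugatesOf r' ∧ toA4 r ^ 3 = 1 ∧
      IsConj (toA4 r) (toA4 r') ∧ ¬IsConj r r' := by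
  have ha : toA4 ga ^ 3 = 1 := by rw [← map_pow, ga_pow_three, map_one]
  have hb : toA4 gb ^ 3 = 1 := by rw [← map_pow, gb_pow_three, map_one]
  have ha₂ : toA4 (ga ^ 2) ^ 3 = 1 := by rw [map_pow, pow_right_comm, ha, one_pow]
  have hb₂ : toA4 (gb ^ 2) ^ 3 = 1 := by rw [map_pow, pow_right_comm, hb, one_pow]
  rcases h with ⟨rfl, rfl⟩ | ⟨rfl, rfl⟩ | ⟨rfl, rfl⟩ | ⟨rfl, rfl⟩
  · exact ⟨ga, gb ^ 2, rfl, rfl, ha, isConj_toA4_ga_toA4_gb_sq, not_isConj_ga_gb_sq⟩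
  · exact ⟨gb, ga ^ 2, rfl, rfl, hb, isConj_toA4_gb_toA4_ga_sq, not_isConj_gb_ga_sq⟩
  · exact ⟨ga ^ 2, gb, rfl, rfl, ha₂, isConj_toA4_gb_toA4_ga_sq.symm,
      fun h ↦ not_isConj_gb_ga_sq h.symm⟩
  · exact ⟨gb ^ 2, ga, rfl, rfl, hb₂, isConj_toA4_ga_toA4_gb_sq.symm,
      fun h ↦ not_isConj_ga_gb_sq h.symm⟩

theorem notMem_center_of_isReflection5 {x : G5} (hx : IsReflection5 x) :
    x ∉ Subgroup.center G5 := by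
  have notMem_of_isConj {r g : G5} (hrg : toA4 r * toA4 g ≠ toA4 g * toA4 r) (hrx : IsConj r x) :
      x ∉ Subgroup.center G5 := by
    intro hx
    obtain rfl : r = x := hrx.eq_of_right_mem_center hx
    rw [← map_mul, ← map_mul, Subgroup.mem_center_iff.mp hx g] at hrg
    exact hrg rfl
  rcases hx with hx | hx | hx | hx
  · refine notMem_of_isConj (g := gb) ?_ hx
    rw [toA4_ga, toA4_gb]
    decide
  · refine notMem_of_isConj (g := ga) ?_ hx
    rw [toA4_ga, toA4_gb]
    decide
  · refine notMem_of_isConj (g := gb) ?_ hx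
    rw [map_pow, toA4_ga, toA4_gb]
    decide
  · refine notMem_of_isConj (g := ga) ?_ hx
    rw [map_pow, toA4_ga, toA4_gb]
    decide

end G5

theorem g5_two_two_one_pair_general {Ri Rj : Set G5} (h : G5.NonAdjacent Ri Rj) {k : ℕ}
    {t : Fin k → G5} (h4 : 4 ≤ {i : Fin k | t i ∉ Subgroup.center G5}.ncard)
    (h2 : 2 ≤ {i : Fin k | t i ∈ Ri}.ncard) (h1 : 1 ≤ {i : Fin k | t i ∈ Rj}.ncard) :
    HurwitzOrbitHasPair Ri t := by
  obtain ⟨r, r', rfl, rfl, hr, hrr', hnot⟩ := h.exists_eq_conjugatesOf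
  obtain ⟨i₁, hi₁, i₂, hi₂, hi⟩ := Set.one_lt_ncard_iff_nontrivial.mp h2
  obtain ⟨j, hj⟩ := Set.nonempty_of_ncard_ne_zero (Nat.one_le_iff_ne_zero.mp h1)
  have ne_of_isConj {i : Fin k} (hi : IsConj r (t i)) : i ≠ j :=
    fun hij ↦ hnot (hi.trans (hij ▸ IsConj.symm hj))
  have hthree : ({i₁, i₂, j} : Set (Fin k)).ncard < {i | t i ∉ Subgroup.center G5}.ncard :=
    (Set.ncard_insert_le _ _).trans_lt (by rwa [Set.ncard_pair (ne_of_isConj hi₂)])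
  obtain ⟨l, hl, hl_notMem⟩ := Set.exists_mem_notMem_of_ncard_lt_ncard hthree
  have hinj : Function.Injective ![i₁, i₂, j, l] := by
    have hi₁j := ne_of_isConj hi₁
    have hi₂j := ne_of_isConj hi₂
    rw [← List.nodup_ofFn]
    change [i₁, i₂, j, l].Nodup
    grind
  exact G5.hasPair_of_notMem_center hinj hr hi₁ hi₂ (hrr'.trans (G5.toA4.map_isConj hj)) hl

theorem g5_two_two_one_pair (Ri Rj : Set G5)
    (h : (Ri = S1 ∧ Rj = S4) ∨ (Ri = S2 ∧ Rj = S3) ∨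
         (Ri = S3 ∧ Rj = S2) ∨ (Ri = S4 ∧ Rj = S1))
    (k : ℕ) (hk : 4 ≤ k) (t : Fin k → G5) (ht : ∀ i, IsReflection5 (t i))
    (h2 : 2 ≤ {i : Fin k | t i ∈ Ri}.ncard)
    (h1 : 1 ≤ {i : Fin k | t i ∈ Rj}.ncard) :
    ∃ s : Fin k → G5, SameHurwitzOrbit t s ∧
      ∃ i : ℕ, ∃ h : i + 1 < k,
        s ⟨i, Nat.lt_of_succ_lt h⟩ = s ⟨i + 1, h⟩ ∧ s ⟨i + 1, h⟩ ∈ Ri :=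
  g5_two_two_one_pair_general h
    (by simpa [G5.notMem_center_of_isReflection5 (ht _), Set.ncard_univ] using hk) h2 h1
end
end
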